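/- arXiv:1806.10035 — 5 statements merged into one kernel-verified Lean document; each statement's English description precedes it below -/
import Mathlib

section
/- Let R be a local ring with finitely generated regular maximal ideal M, and let R' be the integral closure of R in the Nagata transform T(M). The following are equivalent: (1) M is the radical of a principal ideal of R; (2) R' is Prüfer in dimension zero; (3) there is an integral overring of R that is Prüfer in dimension zero. -/
/-!
Write `M` for the maximal ideal of `R`.

Invertibility of an ideal `I` is handled without fractions (`isQInvertible_iff`): it means
`b ∈ I * ((b) : I)` for some nonzerodivisor `b`.

(1) ⇒ (2). If `M` is the radical of `(a)`, then `a` is regular, `T(M) = R[1 / a]`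
(`mem_nagataTransform_iff`) and a power `b` of `a` lies in every zero-dimensional ideal of `R'`
(`exists_pow_mem_of_dim_zero`). It is enough to invert the ideals `(b, x)` of `R'`, i.e. the
fractional ideals `(1, z)` with `z = x / b ∈ T(M)` (`mem_mul_colon`). A comparison of lengths
shows that `z` satisfies a polynomial relation over `R` having a unit coefficient
(`exists_unit_relation`). Since `R'` is integrally closed in `T(M)`, Seidenberg's argument derives
invertibility of `(1, z)` from this relation (`exists_of_aeval_eq_zero`).

(2) ⇒ (3). The ring `R'` is itself an integral overring.

(3) ⇒ (1). Let `S` be an integral overring that is Prüfer in dimension zero. The ideal `MS` is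
finitely generated, regular and zero-dimensional, hence invertible. The maximal ideals of `S` all
lie over `M` but there may be infinitely many of them, so `MS` need not be principal.
Nevertheless, a homogeneous form of some degree `d` in the generators of `M` yields one `x ∈ M`
which generates `(MS) ^ d` locally at every maximal ideal (`exists_common`); its coefficients come
from the integral equations over `R` of finitely many elements of `S`. Every `m ^ d` with `m ∈ M`
is then a multiple of `x` in `S`, and integrality of the quotient over `R` puts a power of `m`
in `xR` (`exists_radical_of_mem_mul_colon`).
-/

set_option synthInstance.maxHeartbeats 400000
set_option maxHeartbeats 800000

open scoped nonZeroDivisors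

/-- An ideal `I` of `R` is invertible if `I · (R :_{Q(R)} I) = R`, where `Q(R)` is the
total quotient ring of `R` (the localization at the nonzerodivisors). -/
def Ideal.IsQInvertible {R : Type*} [CommRing R] (I : Ideal R) : Prop :=
  IsLocalization.coeSubmodule (Localization R⁰) I *
    (1 / IsLocalization.coeSubmodule (Localization R⁰) I) = 1

/-- A ring `R` is Prüfer in dimension zero if every finitely generated regular
zero-dimensional ideal of `R` is invertible. -/
def PruferInDimZero (R : Type*) [CommRing R] : Prop :=
  ∀ I : Ideal R, I.FG → (∃ r ∈ I, r ∈ R⁰) → ringKrullDim (R ⧸ I) ≤ 0 → I.IsQInvertible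

/-- The Nagata transform `T(I) = ⋃_{k>0} (R :_{Q(R)} I^k)` of an ideal `I`, as a subalgebra
of the total quotient ring of `R`.  (The union is already a subring containing `R`, so
taking `Algebra.adjoin` of it does not change the underlying set.) -/
def nagataTransform (R : Type*) [CommRing R] (I : Ideal R) :
    Subalgebra R (Localization R⁰) :=
  Algebra.adjoin R (⋃ k : ℕ,
    ((1 / IsLocalization.coeSubmodule (Localization R⁰) (I ^ (k + 1)) :
      Submodule R (Localization R⁰)) : Set (Localization R⁰)))

/-! ### Seidenberg's argument over an integrally closed subring -/

open Polynomial in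
/-- If `C` is integrally closed in `T`, each coefficient of a polynomial killed by `x` is a sum
`p + q'` with `p, x * p ∈ C` and `q' = x * q` for some `q ∈ C`. When the coefficient is `1`, this
says that the ideal `(1, x)` is invertible. The induction removes the top term: the leading
coefficient times `x` is integral, hence in `C`, and can be absorbed in the next coefficient. -/
lemma exists_of_aeval_eq_zero {C T : Type*} [CommRing C] [CommRing T] [Algebra C T]
    [IsIntegrallyClosedIn C T] (x : T) (n : ℕ) : ∀ g : C[X], g.natDegree ≤ n → aeval x g = 0 →
    ∀ i, ∃ p q p' q' : C, x * algebraMap C T p = algebraMap C T p' ∧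
      x * algebraMap C T q = algebraMap C T q' ∧ p + q' = g.coeff i := by
  -- the top coefficient times `x` is integral, hence lies in `C`
  have top : ∀ (m : ℕ) (g : C[X]), g.natDegree ≤ m → aeval x g = 0 →
      ∃ e : C, algebraMap C T e = algebraMap C T (g.coeff m) * x := by
    intro m g hg h0
    rcases hg.lt_or_eq with h | h
    · exact ⟨0, by simp [coeff_eq_zero_of_natDegree_lt h]⟩
    · have := isIntegral_leadingCoeff_smul g x h0
      rw [leadingCoeff, h, Algebra.smul_def] at this
      exact IsIntegrallyClosedIn.isIntegral_iff.1 this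
  induction n with
  | zero =>
    intro g hg h0 i
    obtain ⟨e, he⟩ := top 0 g hg h0
    rcases Nat.eq_zero_or_pos i with rfl | hi
    · exact ⟨g.coeff 0, 0, e, 0, by rw [he, mul_comm], by simp, by simp⟩
    · exact ⟨0, 0, 0, 0, by simp, by simp,
        by simp [coeff_eq_zero_of_natDegree_lt (lt_of_le_of_lt hg hi)]⟩
  | succ n ih =>
    intro g hg h0 i
    obtain ⟨e, he⟩ := top (n + 1) g hg h0
    let g' : C[X] := g - monomial (n + 1) (g.coeff (n + 1)) + monomial n e
    have hg' : g'.natDegree ≤ n := by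
      rw [natDegree_le_iff_coeff_eq_zero]
      intro N hN
      simp only [g', coeff_add, coeff_sub, coeff_monomial]
      rw [if_neg (by omega : ¬ n = N)]
      split_ifs with h
      · subst h; simp
      · rw [coeff_eq_zero_of_natDegree_lt (by omega)]; simp
    have h0' : aeval x g' = 0 := by
      simp only [g', map_add, map_sub, h0, aeval_monomial, he]
      ring
    obtain ⟨p, q, p', q', h1, h2, h3⟩ := ih g' hg' h0' i
    simp only [g', coeff_add, coeff_sub, coeff_monomial] at h3
    by_cases hi1 : i = n + 1
    · subst hi1
      exact ⟨g.coeff (n + 1), 0, e, 0, by rw [he, mul_comm], by simp, by simp⟩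
    rw [if_neg (Ne.symm hi1)] at h3
    by_cases hi : n = i
    · rw [if_pos hi] at h3
      refine ⟨p, q - g.coeff (n + 1), p', q' - e, h1, ?_, ?_⟩
      · rw [map_sub, mul_sub, h2, map_sub, he, mul_comm x]
      · linear_combination h3
    · rw [if_neg hi] at h3
      exact ⟨p, q, p', q', h1, h2, by linear_combination h3⟩

/-! ### Invertibility without denominators -/

/-- Invertibility of `I` inside the ring itself: `1 ∈ I * (A : I)` is multiplied by a common
denominator `b`, and `b * (A : I)` is replaced by the colon ideal `((b) : I)`. -/
lemma isQInvertible_iff {A : Type*} [CommRing A] (I : Ideal A) :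
    I.IsQInvertible ↔ ∃ b ∈ A⁰, b ∈ I * (Ideal.span {b}).colon (I : Set A) := by
  have hinj := IsLocalization.injective (Localization A⁰) (le_refl A⁰)
  constructor
  · intro h
    have h1 : (1 : Localization A⁰) ∈ IsLocalization.coeSubmodule (Localization A⁰) I *
      (1 / IsLocalization.coeSubmodule (Localization A⁰) I) := by
      rw [show _ = _ from h]; exact Submodule.one_le.1 le_rfl
    suffices H : ∀ t ∈ IsLocalization.coeSubmodule (Localization A⁰) I *
        (1 / IsLocalization.coeSubmodule (Localization A⁰) I), ∃ b ∈ A⁰,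
        ∃ r ∈ I * (Ideal.span {b}).colon (I : Set A),
        algebraMap A (Localization A⁰) b * t = algebraMap A _ r by
      obtain ⟨b, hb, r, hr, hbr⟩ := H 1 h1
      rw [mul_one] at hbr
      exact ⟨b, hb, hinj hbr ▸ hr⟩
    intro t ht
    refine Submodule.mul_induction_on ht ?_ ?_
    · rintro _ hm q hq
      obtain ⟨m, hm', rfl⟩ := (IsLocalization.mem_coeSubmodule _ _).1 hm
      obtain ⟨⟨s, b⟩, hsb⟩ := IsLocalization.surj A⁰ q
      refine ⟨b, b.2, m * s, Ideal.mul_mem_mul hm' ?_, ?_⟩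
      · rw [Submodule.mem_colon]
        intro y hy
        have := Submodule.mem_div_iff_forall_mul_mem.1 hq (algebraMap A _ y)
          ((IsLocalization.mem_coeSubmodule _ _).2 ⟨y, hy, rfl⟩)
        obtain ⟨z, hz⟩ := Submodule.mem_one.1 this
        rw [smul_eq_mul, Ideal.mem_span_singleton]
        refine ⟨z, hinj ?_⟩
        rw [map_mul, map_mul, hz, ← hsb]
        ring
      · rw [map_mul, ← hsb]; ring
    · rintro x y ⟨b, hb, r, hr, h⟩ ⟨b', hb', r', hr', h'⟩
      have key : ∀ (b b' r : A), r ∈ I * (Ideal.span {b}).colon (I : Set A) →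
          b' * r ∈ I * (Ideal.span {b * b'}).colon (I : Set A) := by
        intro b b' r hr
        refine Submodule.mul_induction_on hr ?_ ?_
        · intro i hi j hj
          have : b' * (i * j) = i * (b' * j) := by ring
          rw [this]
          refine Ideal.mul_mem_mul hi ?_
          rw [Submodule.mem_colon] at hj ⊢
          intro y hy
          obtain ⟨z, hz⟩ := Ideal.mem_span_singleton.1 (hj y hy)
          rw [Ideal.mem_span_singleton]
          refine ⟨z, ?_⟩
          rw [smul_eq_mul] at hz ⊢
          linear_combination b' * hz
        · intro u v hu hv
          rw [mul_add]; exact Ideal.add_mem _ hu hv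
      refine ⟨b * b', mul_mem hb hb', b' * r + b * r', Ideal.add_mem _ (key _ _ _ hr) ?_, ?_⟩
      · rw [mul_comm b b']; exact key _ _ _ hr'
      · simp only [map_mul, map_add]
        linear_combination (algebraMap A (Localization A⁰) b') * h +
          (algebraMap A (Localization A⁰) b) * h'
  · rintro ⟨b, hb, h⟩
    refine le_antisymm Submodule.mul_one_div_le_one ?_
    rw [Submodule.one_le]
    have hu := IsLocalization.map_units (Localization A⁰) (⟨b, hb⟩ : A⁰)
    obtain ⟨c, hc⟩ := hu.exists_left_inv
    simp only at hc
    rw [← hc]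
    suffices H : ∀ t ∈ I * (Ideal.span {b}).colon (I : Set A), c * algebraMap A _ t ∈
        IsLocalization.coeSubmodule (Localization A⁰) I *
        (1 / IsLocalization.coeSubmodule (Localization A⁰) I) from H b h
    intro t ht
    refine Submodule.mul_induction_on ht ?_ ?_
    · intro i hi j hj
      have : c * algebraMap A (Localization A⁰) (i * j)
        = algebraMap A (Localization A⁰) i * (c * algebraMap A _ j) := by rw [map_mul]; ring
      rw [this]
      refine Submodule.mul_mem_mul ((IsLocalization.mem_coeSubmodule _ _).2 ⟨i, hi, rfl⟩) ?_
      rw [Submodule.mem_div_iff_forall_mul_mem]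
      intro y hy
      obtain ⟨y, hy', rfl⟩ := (IsLocalization.mem_coeSubmodule _ _).1 hy
      obtain ⟨z, hz⟩ := Ideal.mem_span_singleton.1 (Submodule.mem_colon.1 hj y hy')
      rw [Submodule.mem_one]
      refine ⟨z, ?_⟩
      have hz' := congrArg (algebraMap A (Localization A⁰)) hz
      simp only [smul_eq_mul, map_mul] at hz'
      linear_combination (- algebraMap A (Localization A⁰) z) * hc - c * hz'
    · intro u v hu hv
      rw [map_add, mul_add]; exact Submodule.add_mem _ hu hv

/-- The hypothesis says that every ideal `(b, x)` is invertible; then so is every finitely generated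
ideal containing `b`. A generator `x` is added to an invertible ideal `N ∋ b` by applying the
hypothesis to the products `x * v`, where `v` runs through `((b) : N)`. -/
lemma mem_mul_colon {A : Type*} [CommRing A] (b : A)
    (H : ∀ x : A, ∃ p q p' q' : A, x * p = b * p' ∧ x * q = b * q' ∧ p + q' = 1)
    (I : Ideal A) (hI : I.FG) (hbI : b ∈ I) :
    b ∈ I * (Ideal.span {b}).colon (I : Set A) := by
  obtain ⟨s, rfl⟩ := hI
  suffices K : ∀ s : Finset A, b ∈ (Ideal.span {b} ⊔ Ideal.span (s : Set A)) *
      (Ideal.span {b}).colon ((Ideal.span {b} ⊔ Ideal.span (s : Set A) : Ideal A) : Set A) by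
    have := K s
    rwa [sup_eq_right.2 ((Ideal.span_singleton_le_iff_mem _).2 hbI)] at this
  classical
  intro s
  induction s using Finset.induction_on with
  | empty =>
    refine (mul_one b) ▸ Ideal.mul_mem_mul (r := b) (s := 1) ?_ ?_
    · simp
    · rw [Submodule.mem_colon]
      intro y hy
      simpa using hy
  | insert x s _ ih =>
    rw [Finset.coe_insert, Ideal.span_insert, sup_left_comm]
    generalize hN : Ideal.span {b} ⊔ Ideal.span (s : Set A) = N at ih
    have hbN : b ∈ N := by
      rw [← hN]; exact Ideal.mem_sup_left (Ideal.mem_span_singleton_self b)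
    refine (?_ : N * (Ideal.span {b}).colon (N : Set A) ≤ _) ih
    rw [Submodule.mul_le]
    intro u hu v hv
    have hv' := Submodule.mem_colon.1 hv
    obtain ⟨p, q, p', q', h1, h2, h3⟩ := H (x * v)
    have hcol : ∀ w, (∃ w', x * v * w = b * w') →
        v * w ∈ (Ideal.span {b}).colon ((Ideal.span {x} ⊔ N : Ideal A) : Set A) := by
      rintro w ⟨w', hw⟩
      rw [Submodule.mem_colon]
      intro y hy
      obtain ⟨y1, hy1, y2, hy2, rfl⟩ := Submodule.mem_sup.1 hy
      obtain ⟨y1, rfl⟩ := Ideal.mem_span_singleton.1 hy1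
      obtain ⟨z, hz⟩ := Ideal.mem_span_singleton.1 (hv' y2 hy2)
      rw [smul_eq_mul] at hz
      rw [smul_eq_mul, Ideal.mem_span_singleton]
      exact ⟨w' * y1 + z * w, by linear_combination y1 * hw + w * hz⟩
    obtain ⟨z, hz⟩ := Ideal.mem_span_singleton.1 (hv' u hu)
    rw [smul_eq_mul] at hz
    have huv : u * v = u * (v * p) + x * (z • (v * q)) := by
      rw [smul_eq_mul]
      have : z * (x * v * q) = z * (b * q') := by rw [h2]
      linear_combination (-(u * v)) * h3 + q' * hz - this
    rw [huv]
    refine Ideal.add_mem _ (Ideal.mul_mem_mul (Ideal.mem_sup_right hu) (hcol p ⟨p', h1⟩))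
      (Ideal.mul_mem_mul (Ideal.mem_sup_left (Ideal.mem_span_singleton_self x))
        (Submodule.smul_mem _ z (hcol q ⟨q', h2⟩)))

/-! ### A relation with a unit coefficient -/

lemma length_quotient_ne_top {R : Type*} [CommRing R] [IsLocalRing R]
    (hfg : (IsLocalRing.maximalIdeal R).FG) (J : Ideal R)
    (hJ : IsLocalRing.maximalIdeal R ≤ J.radical) :
    Module.length R (R ⧸ J) ≠ ⊤ := by
  have key : ∀ P : Ideal (R ⧸ J), P.IsPrime →
      P.comap (Ideal.Quotient.mk J) = IsLocalRing.maximalIdeal R := by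
    intro P hP
    refine le_antisymm (IsLocalRing.le_maximalIdeal
      (Ideal.IsPrime.ne_top (hP.comap (Ideal.Quotient.mk J)))) (hJ.trans ?_)
    refine (hP.comap (Ideal.Quotient.mk J)).radical_le_iff.2 fun x hx ↦ ?_
    rw [Ideal.mem_comap, Ideal.Quotient.eq_zero_iff_mem.2 hx]
    exact P.zero_mem
  have hN : IsNoetherianRing (R ⧸ J) := IsNoetherianRing.of_prime fun P hP ↦ by
    rw [← Ideal.map_comap_of_surjective _ Ideal.Quotient.mk_surjective P, key P hP]
    exact hfg.map _
  have hK : Ring.KrullDimLE 0 (R ⧸ J) := Ring.krullDimLE_zero_iff.2 fun P hP ↦ by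
    have := key P hP
    have h2 : (P.comap (Ideal.Quotient.mk J)).IsMaximal := this ▸ inferInstance
    rw [← Ideal.map_comap_of_surjective _ Ideal.Quotient.mk_surjective P]
    exact (Ideal.map_eq_top_or_isMaximal_of_surjective _ Ideal.Quotient.mk_surjective
      h2).resolve_left (by
        rw [Ideal.map_comap_of_surjective _ Ideal.Quotient.mk_surjective P]
        exact hP.ne_top)
  have hA : IsArtinianRing (R ⧸ J) :=
    isArtinianRing_iff_isNoetherianRing_krullDimLE_zero.2 ⟨hN, hK⟩
  rw [Module.length_eq_of_surjective (R := R ⧸ J) (S := R) (M := R ⧸ J)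
    Ideal.Quotient.mk_surjective]
  exact Module.length_ne_top

open scoped Pointwise in
/-- When the maximal ideal is the radical of `(a)` with `a` regular, every fraction `c / a`
satisfies a polynomial relation over `R` with some unit coefficient; the relation is written here
homogenized. The exponent `n` is the length of `R ⧸ (a)`. If no relation had a unit coefficient,
then `J = (a, c) ^ n` would need `n + 1` generators; but `J ⧸ aJ` has the same length `n` as
`R ⧸ (a)`, since multiplication by `a` is an isomorphism from `J` onto `aJ`. -/
lemma exists_unit_relation {R : Type*} [CommRing R] [IsLocalRing R]
    (hfg : (IsLocalRing.maximalIdeal R).FG) (a : R) (ha : a ∈ R⁰)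
    (haM : IsLocalRing.maximalIdeal R = (Ideal.span {a}).radical) (c : R) :
    ∃ (n : ℕ) (r : Fin (n + 1) → R), (∃ i, IsUnit (r i)) ∧
      ∑ i, r i * (c ^ (i : ℕ) * a ^ (n - (i : ℕ))) = 0 := by
  by_contra hcon
  push Not at hcon
  have he := length_quotient_ne_top hfg (Ideal.span {a}) haM.le
  obtain ⟨n, hn⟩ := ENat.ne_top_iff_exists.1 he
  let y : Fin (n + 1) → R := fun i ↦ c ^ (i : ℕ) * a ^ (n - (i : ℕ))
  let φ : (Fin (n + 1) → R) →ₗ[R] R := Fintype.linearCombination R y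
  let J : Ideal R := LinearMap.range φ
  have hJa : a ^ n ∈ J := ⟨Pi.single 0 1, by simp [φ, y, Fintype.linearCombination_apply_single]⟩
  have hJM : IsLocalRing.maximalIdeal R ≤ J.radical := by
    rw [haM]
    refine Ideal.radical_le_radical_iff.2 ?_
    rw [Ideal.span_singleton_le_iff_mem]
    exact ⟨n, hJa⟩
  have hJl := length_quotient_ne_top hfg J hJM
  let ψ : (Fin (n + 1) → R) →ₗ[R] (Fin (n + 1) → R ⧸ IsLocalRing.maximalIdeal R) :=
    LinearMap.pi fun i ↦ (Submodule.mkQ (IsLocalRing.maximalIdeal R)).comp (LinearMap.proj i)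
  have hψ : Function.Surjective ψ := by
    intro v
    choose w hw using fun i ↦ Submodule.mkQ_surjective (IsLocalRing.maximalIdeal R) (v i)
    exact ⟨w, funext hw⟩
  let aJ : Ideal R := a • J
  have haJ : aJ ≤ J := Submodule.smul_le_self_of_tower a J
  let g : (Fin (n + 1) → R) →ₗ[R] R ⧸ aJ := (Submodule.mkQ aJ).comp φ
  -- no relation has a unit coefficient, so reduction of coefficients factors through `J ⧸ aJ`
  have hker : LinearMap.ker g ≤ LinearMap.ker ψ := by
    intro v hv
    have h1 : φ v ∈ aJ := (Submodule.Quotient.mk_eq_zero _).1 hv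
    obtain ⟨z, ⟨w, rfl⟩, hz⟩ := (Submodule.mem_smul_pointwise_iff_exists _ _ _).1 h1
    have h2 : φ (v - a • w) = 0 := by rw [map_sub, map_smul, hz, sub_self]
    have h3 : ∀ i, ¬ IsUnit ((v - a • w) i) := by
      intro i hi
      refine hcon n (v - a • w) ⟨i, hi⟩ ?_
      simpa [φ, Fintype.linearCombination_apply, y] using h2
    have haM' : a ∈ IsLocalRing.maximalIdeal R := by
      rw [haM]; exact Ideal.le_radical (Ideal.mem_span_singleton_self a)
    rw [LinearMap.mem_ker]
    funext i
    have h4 : v i ∈ IsLocalRing.maximalIdeal R := by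
      have := Ideal.add_mem _ ((IsLocalRing.mem_maximalIdeal _).2 (h3 i))
        (Ideal.mul_mem_right (w i) _ haM')
      simpa using this
    simpa [ψ] using (Submodule.Quotient.mk_eq_zero _).2 h4
  -- length of `R ⧸ aJ` computed in two ways
  have l1 := Module.length_eq_add_of_exact (Ideal.mulQuot a J) (Ideal.quotOfMul a J)
    (Ideal.mulQuot_injective J ha) (Ideal.quotOfMul_surjective J) (Ideal.exact_mulQuot_quotOfMul J)
  have l2 := Module.length_eq_add_of_exact (LinearMap.range g).subtype
    (Submodule.factor haJ) (Submodule.subtype_injective _) (Submodule.factor_surjective haJ)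
    (by
      rw [LinearMap.exact_iff, Submodule.range_subtype, LinearMap.range_comp]
      ext z
      obtain ⟨z, rfl⟩ := Submodule.mkQ_surjective _ z
      constructor
      · intro hz
        have : z ∈ J := (Submodule.Quotient.mk_eq_zero _).1 hz
        exact ⟨z, this, rfl⟩
      · rintro ⟨w, hw, hw2⟩
        rw [← hw2]
        exact (Submodule.Quotient.mk_eq_zero _).2 (hw : w ∈ J))
  have l3 : Module.length R (Fin (n + 1) → R ⧸ IsLocalRing.maximalIdeal R)
      ≤ Module.length R (LinearMap.range g) := by
    rw [← g.quotKerEquivRange.length_eq]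
    refine Module.length_le_of_surjective ((LinearMap.ker g).liftQ ψ hker) ?_
    rw [← LinearMap.range_eq_top, Submodule.range_liftQ, LinearMap.range_eq_top]
    exact hψ
  have l4 : ((n + 1 : ℕ) : ℕ∞) ≤
      Module.length R (Fin (n + 1) → R ⧸ IsLocalRing.maximalIdeal R) := by
    rw [Module.length_pi_of_fintype]
    have : IsSimpleModule R (R ⧸ IsLocalRing.maximalIdeal R) :=
      isSimpleModule_iff_isCoatom.2 (IsLocalRing.maximalIdeal.isMaximal R).out
    simp
  have l5 : Module.length R (R ⧸ J) + Module.length R (R ⧸ Ideal.span {a})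
      = Module.length R (LinearMap.range g) + Module.length R (R ⧸ J) := by
    rw [← l2, l1]
  rw [add_comm] at l5
  replace l5 := WithTop.add_right_cancel hJl l5
  rw [← l5, ← hn] at l3
  have := l4.trans l3
  rw [Nat.cast_le] at this
  omega

/-! ### Invertible extensions of the maximal ideal to integral overrings -/

/-- Over a field, a nonzero algebraic element is inverted by a polynomial in it;
here this is done simultaneously in all residue fields `S ⧸ P` in which `u` does not vanish. -/
lemma exists_inverse_mod {R S : Type*} [CommRing R] [IsLocalRing R] [CommRing S] [Algebra R S]
    (u : S) (n : ℕ) : ∀ f : Polynomial R, f.natDegree ≤ n → (∃ i, IsUnit (f.coeff i)) →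
    ∃ v : S, ∀ P : Ideal S, P.IsPrime →
      P.comap (algebraMap R S) = IsLocalRing.maximalIdeal R →
      Polynomial.aeval u f ∈ P → u ∉ P → u * v - 1 ∈ P := by
  have hf0 : ∀ f : Polynomial R, Polynomial.aeval u f =
      u * Polynomial.aeval u f.divX + algebraMap R S (f.coeff 0) := by
    intro f
    have := congrArg (Polynomial.aeval u) f.X_mul_divX_add
    rw [map_add, map_mul, Polynomial.aeval_X, Polynomial.aeval_C] at this
    exact this.symm
  have unit0 : ∀ f : Polynomial R, IsUnit (f.coeff 0) →
      ∃ v : S, ∀ P : Ideal S, P.IsPrime →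
      P.comap (algebraMap R S) = IsLocalRing.maximalIdeal R →
      Polynomial.aeval u f ∈ P → u ∉ P → u * v - 1 ∈ P := by
    intro f hu
    obtain ⟨c, hc⟩ := hu.exists_left_inv
    refine ⟨-(algebraMap R S c) * Polynomial.aeval u f.divX, fun P _ _ hf _ ↦ ?_⟩
    have hc' := congrArg (algebraMap R S) hc
    rw [map_mul, map_one] at hc'
    have : u * (-(algebraMap R S c) * Polynomial.aeval u f.divX) - 1 =
        -(algebraMap R S c) * Polynomial.aeval u f := by
      rw [hf0 f]
      linear_combination hc'
    rw [this]
    exact P.mul_mem_left _ hf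
  induction n with
  | zero =>
    rintro f hf ⟨i, hi⟩
    refine unit0 f ?_
    rcases Nat.eq_zero_or_pos i with rfl | h
    · exact hi
    · rw [Polynomial.coeff_eq_zero_of_natDegree_lt (by omega)] at hi
      rw [isUnit_zero_iff] at hi
      rw [← mul_one (f.coeff 0), ← hi, mul_zero]
      exact hi ▸ isUnit_one
  | succ n ih =>
    rintro f hf ⟨i, hi⟩
    by_cases h0 : IsUnit (f.coeff 0)
    · exact unit0 f h0
    have hi0 : i ≠ 0 := by rintro rfl; exact h0 hi
    obtain ⟨v, hv⟩ := ih f.divX (by rw [Polynomial.natDegree_divX_eq_natDegree_tsub_one]; omega)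
      ⟨i - 1, by rwa [Polynomial.coeff_divX, Nat.sub_add_cancel (by omega)]⟩
    refine ⟨v, fun P hP hPM hfP hu ↦ hv P hP hPM ?_ hu⟩
    have h1 : algebraMap R S (f.coeff 0) ∈ P := by
      rw [← Ideal.mem_comap, hPM]; exact (IsLocalRing.mem_maximalIdeal _).2 h0
    rw [hf0 f] at hfP
    exact (hP.mem_or_mem ((Ideal.add_mem_iff_left P h1).1 hfP)).resolve_left hu

/-- One monic polynomial `h` over `R` has as roots, modulo each prime `P` over the maximal ideal,
all those fractions `w v / u v` with `v ∈ V` whose denominator does not vanish modulo `P`. -/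
lemma exists_monic_slope {R S : Type*} [CommRing R] [IsLocalRing R] [CommRing S] [Algebra R S]
    [Algebra.IsIntegral R S] (V : Finset S) (u w : S → S) :
    ∃ h : Polynomial R, h.Monic ∧ ∀ P : Ideal S, P.IsPrime →
      P.comap (algebraMap R S) = IsLocalRing.maximalIdeal R → ∀ v ∈ V, u v ∉ P →
      ∃ τ : S, u v * τ - w v ∈ P ∧ Polynomial.aeval τ h ∈ P := by
  classical
  have one : ∀ u w : S, ∃ h : Polynomial R, h.Monic ∧ ∀ P : Ideal S, P.IsPrime →
      P.comap (algebraMap R S) = IsLocalRing.maximalIdeal R → u ∉ P →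
      ∃ τ : S, u * τ - w ∈ P ∧ Polynomial.aeval τ h ∈ P := by
    intro u w
    obtain ⟨f, hf, hfu⟩ := Algebra.IsIntegral.isIntegral (R := R) u
    obtain ⟨v, hv⟩ := exists_inverse_mod u f.natDegree f le_rfl
      ⟨f.natDegree, by rw [hf.coeff_natDegree]; exact isUnit_one⟩
    obtain ⟨h, hh, hhv⟩ := Algebra.IsIntegral.isIntegral (R := R) (w * v)
    refine ⟨h, hh, fun P hP hPM hu ↦ ⟨w * v, ?_, ?_⟩⟩
    · have := P.mul_mem_left w (hv P hP hPM (by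
        rw [Polynomial.aeval_def, hfu]; exact P.zero_mem) hu)
      convert this using 1
      ring
    · rw [Polynomial.aeval_def, hhv]; exact P.zero_mem
  choose h hmon hh using fun v ↦ one (u v) (w v)
  refine ⟨∏ v ∈ V, h v, Polynomial.monic_prod_of_monic _ _ fun v _ ↦ hmon v, ?_⟩
  intro P hP hPM v hv hu
  obtain ⟨τ, h1, h2⟩ := hh v P hP hPM hu
  refine ⟨τ, h1, ?_⟩
  rw [map_prod]
  exact Ideal.mem_of_dvd P (Finset.dvd_prod_of_mem _ hv) h2

open Polynomial in
lemma eval_scaleRoots_eq_sum {T : Type*} [CommRing T] (g : T[X]) (s t : T) {n : ℕ}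
    (hn : g.natDegree = n) :
    (g.scaleRoots s).eval t = ∑ i ∈ Finset.range (n + 1), g.coeff i * s ^ (n - i) * t ^ i := by
  rw [eval_eq_sum_range, natDegree_scaleRoots, hn]
  simp only [coeff_scaleRoots, hn]

open Polynomial in
/-- The value at `w` of `h.scaleRoots u` is the value at `(u, w)` of the homogenization of `h`, so
it is multiplied by a power of the common ratio `c / e` when the two arguments are. -/
lemma scaleRoots_hom {R S : Type*} [CommRing R] [CommRing S] [Algebra R S]
    (h : R[X]) (hm : h.Monic) (x y : R) (u w e c : S)
    (hx : algebraMap R S x * e = c * u) (hy : algebraMap R S y * e = c * w) :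
    algebraMap R S ((h.scaleRoots x).eval y) * e ^ h.natDegree =
      c ^ h.natDegree * ((h.map (algebraMap R S)).scaleRoots u).eval w := by
  nontriviality S
  rw [eval_scaleRoots_eq_sum h x y rfl, eval_scaleRoots_eq_sum _ u w (hm.natDegree_map _),
    map_sum, Finset.sum_mul,
    Finset.mul_sum]
  refine Finset.sum_congr rfl fun i hi ↦ ?_
  have hi' : i ≤ h.natDegree := by simpa [Nat.lt_succ_iff] using hi
  rw [coeff_map, map_mul, map_mul, map_pow, map_pow]
  have e1 : e ^ h.natDegree = e ^ (h.natDegree - i) * e ^ i := by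
    rw [← pow_add, Nat.sub_add_cancel hi']
  have e2 : c ^ h.natDegree = c ^ (h.natDegree - i) * c ^ i := by
    rw [← pow_add, Nat.sub_add_cancel hi']
  calc _ = algebraMap R S (h.coeff i) * (algebraMap R S x * e) ^ (h.natDegree - i) *
        (algebraMap R S y * e) ^ i := by rw [e1, mul_pow, mul_pow]; ring
    _ = _ := by rw [hx, hy, e2, mul_pow, mul_pow]; ring

open Polynomial in
/-- A single element `x` of the maximal ideal, a form of degree `d` in the given elements `m`,
can stand in for all of them: if `m * v / b` is nonzero modulo `P` for some `m`, then so is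
`x * v ^ d / b ^ d`. This is a homogeneous prime avoidance valid for infinitely many primes `P`.
Given `x` for all but one element `m`, the monic polynomial `h` from `exists_monic_slope` has
among its roots the values of `m ^ d / x` modulo these primes, and with `h'` its homogenization
the form `x ^ (n + 1) + m ^ d * h' (x, m ^ d)`, `n = deg h`, vanishes at no `P` where `x` or `m`
does not: if `x` is nonzero then the second term vanishes, and otherwise the second term is a
power of `m`. -/
lemma exists_common {R S : Type*} [CommRing R] [IsLocalRing R] [CommRing S] [Algebra R S]
    [Algebra.IsIntegral R S] (b : S) (hb : b ∈ S⁰) (V : Finset S) (ms : Finset R)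
    (hms : ∀ m ∈ ms, m ∈ IsLocalRing.maximalIdeal R)
    (hV : ∀ m ∈ ms, ∀ v ∈ V, b ∣ algebraMap R S m * v) :
    ∃ (d : ℕ) (x : R) (u : S → S), d ≠ 0 ∧ x ∈ IsLocalRing.maximalIdeal R ∧
      (∀ v ∈ V, algebraMap R S x * v ^ d = b ^ d * u v) ∧
      ∀ P : Ideal S, P.IsPrime → P.comap (algebraMap R S) = IsLocalRing.maximalIdeal R →
        ∀ v ∈ V, ∀ m ∈ ms, ∀ s, algebraMap R S m * v = b * s → s ∉ P → u v ∉ P := by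
  classical
  induction ms using Finset.induction_on with
  | empty => exact ⟨1, 0, 0, one_ne_zero, Ideal.zero_mem _, by simp, by simp⟩
  | insert m ms _ ih =>
    obtain ⟨d, x, u, hd, hxM, hu, hP⟩ := ih (fun m hm ↦ hms m (Finset.mem_insert_of_mem hm))
      (fun m hm ↦ hV m (Finset.mem_insert_of_mem hm))
    have hmM := hms m (Finset.mem_insert_self _ _)
    have hex : ∀ v : S, ∃ s, v ∈ V → algebraMap R S m * v = b * s := fun v ↦ by
      by_cases hv : v ∈ V
      · obtain ⟨s, hs⟩ := hV m (Finset.mem_insert_self _ _) v hv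
        exact ⟨s, fun _ ↦ hs⟩
      · exact ⟨0, fun h ↦ absurd h hv⟩
    choose s hs using hex
    obtain ⟨h, hmon, hh⟩ := exists_monic_slope (R := R) V u (fun v ↦ s v ^ d)
    refine ⟨d * (h.natDegree + 1), x ^ (h.natDegree + 1) + m ^ d * (h.scaleRoots x).eval (m ^ d),
      fun v ↦ u v ^ (h.natDegree + 1) +
        s v ^ d * ((h.map (algebraMap R S)).scaleRoots (u v)).eval (s v ^ d), ?_, ?_, ?_, ?_⟩
    · exact mul_ne_zero hd (Nat.succ_ne_zero _)
    · exact Ideal.add_mem _ (Ideal.pow_mem_of_mem _ hxM _ (Nat.succ_pos _))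
        (Ideal.mul_mem_right _ _ (Ideal.pow_mem_of_mem _ hmM _ (Nat.pos_of_ne_zero hd)))
    · intro v hv
      have hy : algebraMap R S (m ^ d) * v ^ d = b ^ d * s v ^ d := by
        rw [map_pow, ← mul_pow, hs v hv, mul_pow]
      have h1 := scaleRoots_hom h hmon x (m ^ d) (u v) (s v ^ d) (v ^ d) (b ^ d) (hu v hv) hy
      have h2 : (algebraMap R S x * v ^ d) ^ (h.natDegree + 1) =
        (b ^ d * u v) ^ (h.natDegree + 1) := by rw [hu v hv]
      rw [map_add, map_mul, map_pow, pow_mul, pow_mul, add_mul, ← mul_pow, h2, mul_add,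
        mul_pow]
      congr 1
      rw [pow_succ (v ^ d), pow_succ (b ^ d)]
      linear_combination (algebraMap R S (m ^ d) * v ^ d) * h1 + ((b ^ d) ^ h.natDegree *
        ((h.map (algebraMap R S)).scaleRoots (u v)).eval (s v ^ d)) * hy
    · intro P hPp hPM v hv m' hm' s' hs' hs'P
      set G := ((h.map (algebraMap R S)).scaleRoots (u v)).eval (s v ^ d) with hG
      change u v ^ (h.natDegree + 1) + s v ^ d * G ∉ P
      by_cases huP : u v ∈ P
      · intro hmem
        have hsP : s v ∉ P := by
          rcases Finset.mem_insert.1 hm' with rfl | hm'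
          · rw [hs v hv] at hs'
            rwa [mul_cancel_left_mem_nonZeroDivisors hb |>.1 hs']
          · exact absurd huP (hP P hPp hPM v hv m' hm' s' hs' hs'P)
        have h1 : s v ^ d * G ∈ P :=
          (Ideal.add_mem_iff_right P (Ideal.pow_mem_of_mem _ huP _ (Nat.succ_pos _))).1 hmem
        have h2 : G ∈ P := (hPp.mem_or_mem h1).resolve_left fun h ↦ hsP (hPp.mem_of_pow_mem _ h)
        have : Nontrivial S := ⟨⟨s v, 0, fun h ↦ hsP (h ▸ P.zero_mem)⟩⟩
        rw [hG, eval_scaleRoots_eq_sum _ _ _ (hmon.natDegree_map _), Finset.sum_range_succ,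
          Ideal.add_mem_iff_right] at h2
        · rw [coeff_map, hmon.coeff_natDegree, map_one, Nat.sub_self, pow_zero, one_mul,
            one_mul] at h2
          exact hsP (hPp.mem_of_pow_mem _ (hPp.mem_of_pow_mem _ h2))
        · refine Ideal.sum_mem _ fun i hi ↦ Ideal.mul_mem_right _ _ (Ideal.mul_mem_left _ _ ?_)
          exact Ideal.pow_mem_of_mem _ huP _ (Nat.sub_pos_of_lt (Finset.mem_range.1 hi))
      · intro hmem
        obtain ⟨τ, h1, h2⟩ := hh P hPp hPM v hv huP
        have h3 : G ∈ P := by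
          have e1 := Polynomial.sub_dvd_eval_sub (u v * τ) (s v ^ d)
            ((h.map (algebraMap R S)).scaleRoots (u v))
          have e2 := Ideal.mem_of_dvd P e1 h1
          rw [scaleRoots_eval_mul, eval_map_algebraMap] at e2
          exact (Submodule.sub_mem_iff_right P (P.mul_mem_left _ h2)).1 e2
        exact huP (hPp.mem_of_pow_mem _
          ((Ideal.add_mem_iff_left P (P.mul_mem_left _ h3)).1 hmem))

/-- The assumption says that the extension `MS` of the maximal ideal `M` is invertible. The
fractions `x * v ^ d / b ^ d` from `exists_common` generate the unit ideal of `S`, hence `x` divides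
`m ^ d` in `S` for every `m ∈ M`. An integral equation of the quotient then shows that a power
of `m ^ d` lies in `(x)` already in `R`. -/
lemma exists_radical_of_mem_mul_colon {R S : Type*} [CommRing R] [IsLocalRing R] [CommRing S]
    [Algebra R S] [Algebra.IsIntegral R S] (hinj : Function.Injective (algebraMap R S))
    (hfg : (IsLocalRing.maximalIdeal R).FG) (b : S) (hb : b ∈ S⁰)
    (h : b ∈ (IsLocalRing.maximalIdeal R).map (algebraMap R S) * (Ideal.span {b}).colon
      ((IsLocalRing.maximalIdeal R).map (algebraMap R S) : Set S)) :
    ∃ a : R, IsLocalRing.maximalIdeal R = (Ideal.span {a}).radical := by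
  classical
  obtain ⟨ms, hms⟩ := hfg
  have hmsM : ∀ m ∈ ms, m ∈ IsLocalRing.maximalIdeal R := fun m hm ↦
    hms ▸ Ideal.subset_span hm
  obtain ⟨T, V, hT, hV, hbTV⟩ := Submodule.mem_span_mul_finite_of_mem_mul h
  have hdvd : ∀ m ∈ IsLocalRing.maximalIdeal R, ∀ v ∈ V, b ∣ algebraMap R S m * v := by
    intro m hm v hv
    have := Submodule.mem_colon.1 (hV hv) _ (Ideal.mem_map_of_mem _ hm)
    rw [smul_eq_mul, Ideal.mem_span_singleton, mul_comm] at this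
    exact this
  obtain ⟨d, x, u, hd, hxM, hu, hP⟩ := exists_common b hb V ms hmsM
    fun m hm ↦ hdvd m (hmsM m hm)
  have htop : Ideal.span (u '' (V : Set S)) = ⊤ := by
    by_contra hne
    obtain ⟨P, hPm, hle⟩ := Ideal.exists_le_maximal _ hne
    have hPM : P.comap (algebraMap R S) = IsLocalRing.maximalIdeal R :=
      IsLocalRing.eq_maximalIdeal (Ideal.isMaximal_comap_of_isIntegral_of_isMaximal P)
    -- otherwise all products of generators lie in `b P`, hence `b ∈ b P` and `1 ∈ P`
    have hmem : ∀ m ∈ ms, ∀ v ∈ V, algebraMap R S m * v ∈ Ideal.span {b} * P := by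
      intro m hm v hv
      obtain ⟨s, hs⟩ := hdvd m (hmsM m hm) v hv
      rw [hs]
      refine Ideal.mul_mem_mul (Ideal.mem_span_singleton_self b) ?_
      by_contra hsP
      exact hP P hPm.isPrime hPM v hv m hm s hs hsP
        (hle (Ideal.subset_span (Set.mem_image_of_mem u hv)))
    have hbP : b ∈ Ideal.span {b} * P := by
      have hle2 : (IsLocalRing.maximalIdeal R).map (algebraMap R S) * Ideal.span (V : Set S) ≤
          Ideal.span {b} * P := by
        rw [← hms, Ideal.map_span, Ideal.span_mul_span, Ideal.span_le]
        rintro _ ⟨_, ⟨m, hm, rfl⟩, v, hv, rfl⟩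
        exact hmem m hm v hv
      refine hle2 ?_
      rw [← Submodule.span_mul_span] at hbTV
      exact Ideal.mul_mono_left (Submodule.span_le.2 hT) hbTV
    obtain ⟨z, hz, hbz⟩ := Ideal.mem_span_singleton_mul.1 hbP
    have : z = 1 := (mul_cancel_left_mem_nonZeroDivisors hb).1 (by rw [hbz, mul_one])
    exact hPm.ne_top ((Ideal.eq_top_iff_one P).2 (this ▸ hz))
  refine ⟨x, le_antisymm (fun m hm ↦ ?_) ?_⟩
  · have hx : ∀ t : S, algebraMap R S x ∣ algebraMap R S (m ^ d) * t := by
      intro t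
      have : Ideal.span (u '' (V : Set S)) ≤
          (Ideal.span {algebraMap R S x}).colon {algebraMap R S (m ^ d)} := by
        rw [Ideal.span_le]
        rintro _ ⟨v, hv, rfl⟩
        obtain ⟨s, hs⟩ := hdvd m hm v hv
        rw [SetLike.mem_coe, Submodule.mem_colon_singleton, smul_eq_mul,
          Ideal.mem_span_singleton]
        refine ⟨s ^ d, (mul_cancel_left_mem_nonZeroDivisors (pow_mem hb d)).1 ?_⟩
        have h1 : (algebraMap R S m * v) ^ d = (b * s) ^ d := by rw [hs]
        rw [map_pow]
        rw [mul_pow, mul_pow] at h1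
        linear_combination (-(algebraMap R S m ^ d)) * hu v hv + algebraMap R S x * h1
      have h1 : t ∈ Ideal.span (u '' (V : Set S)) := htop ▸ Submodule.mem_top
      have h2 := Submodule.mem_colon_singleton.1 (this h1)
      rwa [smul_eq_mul, Ideal.mem_span_singleton, mul_comm] at h2
    obtain ⟨s, hs⟩ := hx 1
    rw [mul_one] at hs
    -- an integral equation of `s` gives one of `m ^ d` after multiplying by a power of `x`
    obtain ⟨f, hf, hfs⟩ := Algebra.IsIntegral.isIntegral (R := R) s
    have h1 := Polynomial.scaleRoots_eval₂_mul (p := f) (algebraMap R S) s x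
    rw [hfs, mul_zero, ← hs, Polynomial.eval₂_at_apply] at h1
    have h2 : (f.scaleRoots x).eval (m ^ d) = 0 := hinj (by rw [h1, map_zero])
    rw [eval_scaleRoots_eq_sum f _ _ rfl, Finset.sum_range_succ, hf.coeff_natDegree,
      Nat.sub_self, pow_zero, mul_one, one_mul] at h2
    refine ⟨d * f.natDegree, ?_⟩
    rw [pow_mul, eq_neg_of_add_eq_zero_right h2]
    refine neg_mem (Ideal.sum_mem _ fun i hi ↦ Ideal.mul_mem_right _ _ (Ideal.mul_mem_left _ _ ?_))
    exact Ideal.pow_mem_of_mem _ (Ideal.mem_span_singleton_self x) _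
      (Nat.sub_pos_of_lt (Finset.mem_range.1 hi))
  · rw [(IsLocalRing.maximalIdeal.isMaximal R).isPrime.radical_le_iff,
      Ideal.span_singleton_le_iff_mem]
    exact hxM

/-! ### The Nagata transform and dimension zero -/

/-- If `M` is the radical of `(a)`, the Nagata transform of `M` is `R[1 / a]`. -/
lemma mem_nagataTransform_iff {R : Type*} [CommRing R] {M : Ideal R} (hfg : M.FG) (a : R)
    (haM : M = (Ideal.span {a}).radical) (t : Localization R⁰) :
    t ∈ nagataTransform R M ↔ ∃ (k : ℕ) (c : R), t * algebraMap R _ (a ^ k) = algebraMap R _ c := by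
  have ha' : a ∈ M := by rw [haM]; exact Ideal.le_radical (Ideal.mem_span_singleton_self a)
  constructor
  · intro ht
    refine Algebra.adjoin_induction ?_ ?_ ?_ ?_ ht
    · intro x hx
      obtain ⟨k, hk⟩ := Set.mem_iUnion.1 hx
      have := Submodule.mem_div_iff_forall_mul_mem.1 hk (algebraMap R _ (a ^ (k + 1)))
        ((IsLocalization.mem_coeSubmodule _ _).2 ⟨_, Ideal.pow_mem_pow ha' _, rfl⟩)
      obtain ⟨c, hc⟩ := Submodule.mem_one.1 this
      exact ⟨k + 1, c, hc.symm⟩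
    · intro r
      exact ⟨0, r, by simp⟩
    · rintro x y - - ⟨k, c, h⟩ ⟨l, e, h'⟩
      refine ⟨k + l, c * a ^ l + e * a ^ k, ?_⟩
      rw [pow_add, map_mul, map_add, map_mul, map_mul, ← h, ← h']
      ring
    · rintro x y - - ⟨k, c, h⟩ ⟨l, e, h'⟩
      refine ⟨k + l, c * e, ?_⟩
      rw [pow_add, map_mul, map_mul, ← h, ← h']
      ring
  · rintro ⟨k, c, h⟩
    obtain ⟨N, hN⟩ := Ideal.exists_pow_le_of_le_radical_of_fg haM.le hfg
    refine Algebra.subset_adjoin (Set.mem_iUnion.2 ⟨N * k, ?_⟩)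
    rw [SetLike.mem_coe, Submodule.mem_div_iff_forall_mul_mem]
    intro y hy
    obtain ⟨y, hy', rfl⟩ := (IsLocalization.mem_coeSubmodule _ _).1 hy
    have h1 : y ∈ Ideal.span {a ^ k} := by
      rw [← Ideal.span_singleton_pow]
      refine Ideal.pow_right_mono hN k ?_
      rw [← pow_mul]
      exact Ideal.pow_le_pow_right (Nat.le_succ _) hy'
    obtain ⟨z, rfl⟩ := Ideal.mem_span_singleton.1 h1
    rw [Submodule.mem_one]
    exact ⟨c * z, by rw [map_mul, map_mul, ← h, mul_assoc]⟩

/-- The primes of `A` containing a zero-dimensional ideal `I` are maximal, so they lie over the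
maximal ideal of `R`; hence the elements of the latter are nilpotent modulo `I`. -/
lemma exists_pow_mem_of_dim_zero {R A : Type*} [CommRing R] [IsLocalRing R] [CommRing A]
    [Algebra R A] [Algebra.IsIntegral R A] (a : R)
    (ha : a ∈ IsLocalRing.maximalIdeal R) (I : Ideal A)
    (hI : ringKrullDim (A ⧸ I) ≤ 0) : ∃ m : ℕ, algebraMap R A (a ^ m) ∈ I := by
  suffices algebraMap R A a ∈ I.radical by
    obtain ⟨m, hm⟩ := this
    exact ⟨m, by rwa [map_pow]⟩
  have hK : Ring.KrullDimLE 0 (A ⧸ I) := by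
    rw [Ring.krullDimLE_iff]; exact_mod_cast hI
  rw [Ideal.radical_eq_sInf, Ideal.mem_sInf]
  rintro P ⟨hIP, hP⟩
  have hker : RingHom.ker (Ideal.Quotient.mk I) ≤ P := by rwa [Ideal.mk_ker]
  have h1 : (P.map (Ideal.Quotient.mk I)).IsPrime :=
    Ideal.map_isPrime_of_surjective Ideal.Quotient.mk_surjective hker
  have h2 := Ring.krullDimLE_zero_iff.1 hK _ h1
  have h3 : P.IsMaximal := by
    have := Ideal.comap_isMaximal_of_surjective (Ideal.Quotient.mk I)
      Ideal.Quotient.mk_surjective (K := P.map (Ideal.Quotient.mk I))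
    rwa [Ideal.comap_map_of_surjective' _ Ideal.Quotient.mk_surjective, sup_eq_left.2 hker] at this
  have h4 : P.comap (algebraMap R A) = IsLocalRing.maximalIdeal R :=
    IsLocalRing.eq_maximalIdeal (Ideal.isMaximal_comap_of_isIntegral_of_isMaximal P)
  rw [← Ideal.mem_comap, h4]
  exact ha

lemma ringKrullDim_quotient_map_le_zero {R S : Type*} [CommRing R] [IsLocalRing R] [CommRing S]
    [Algebra R S] [Algebra.IsIntegral R S] :
    ringKrullDim (S ⧸ (IsLocalRing.maximalIdeal R).map (algebraMap R S)) ≤ 0 := by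
  set I := (IsLocalRing.maximalIdeal R).map (algebraMap R S) with hI
  suffices Ring.KrullDimLE 0 (S ⧸ I) by
    have := Ring.krullDimLE_iff.1 this
    exact_mod_cast this
  refine Ring.krullDimLE_zero_iff.2 fun P hP ↦ ?_
  have hP' : (P.comap (Ideal.Quotient.mk I)).IsPrime := hP.comap _
  have h1 : (P.comap (Ideal.Quotient.mk I)).comap (algebraMap R S) =
      IsLocalRing.maximalIdeal R := by
    refine le_antisymm (IsLocalRing.le_maximalIdeal (hP'.comap _).ne_top) ?_
    rw [← Ideal.map_le_iff_le_comap, ← hI]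
    intro x hx
    rw [Ideal.mem_comap, Ideal.Quotient.eq_zero_iff_mem.2 hx]
    exact P.zero_mem
  have h2 : (P.comap (Ideal.Quotient.mk I)).IsMaximal :=
    Ideal.isMaximal_of_isIntegral_of_isMaximal_comap (R := R) _ (h1 ▸ inferInstance)
  rw [← Ideal.map_comap_of_surjective _ Ideal.Quotient.mk_surjective P]
  exact (Ideal.map_eq_top_or_isMaximal_of_surjective _ Ideal.Quotient.mk_surjective
      h2).resolve_left (by
        rw [Ideal.map_comap_of_surjective _ Ideal.Quotient.mk_surjective P]
        exact hP.ne_top)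

/-! ### Transport along isomorphisms -/

lemma RingEquiv.map_mem_nonZeroDivisors_of_mem {A B : Type*} [CommRing A] [CommRing B]
    (e : A ≃+* B) {b : A} (hb : b ∈ A⁰) : e b ∈ B⁰ := by
  rw [← MulEquivClass.map_nonZeroDivisors e]
  exact Submonoid.mem_map_of_mem e hb

lemma Ideal.IsQInvertible.map_ringEquiv {A B : Type*} [CommRing A] [CommRing B] (e : A ≃+* B)
    {I : Ideal A} (h : I.IsQInvertible) : (I.map (e : A →+* B)).IsQInvertible := by
  rw [isQInvertible_iff] at h ⊢
  obtain ⟨b, hb, hbI⟩ := h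
  refine ⟨e b, e.map_mem_nonZeroDivisors_of_mem hb, ?_⟩
  have h1 := Ideal.mem_map_of_mem (e : A →+* B) hbI
  rw [Ideal.map_mul] at h1
  refine Ideal.mul_mono_right ?_ h1
  rw [Ideal.map_le_iff_le_comap]
  intro c hc
  rw [Ideal.mem_comap, Submodule.mem_colon]
  intro y hy
  obtain ⟨x, hx, rfl⟩ := (Ideal.mem_map_of_equiv e y).1 hy
  obtain ⟨z, hz⟩ := Ideal.mem_span_singleton.1 (Submodule.mem_colon.1 hc x hx)
  rw [smul_eq_mul] at hz
  rw [smul_eq_mul, Ideal.mem_span_singleton]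
  exact ⟨e z, by rw [← map_mul, ← hz]; simp⟩

lemma PruferInDimZero.of_ringEquiv {A B : Type*} [CommRing A] [CommRing B] (e : A ≃+* B)
    (h : PruferInDimZero A) : PruferInDimZero B := by
  rintro I hfg ⟨r, hr, hr0⟩ hdim
  have hmap : (I.map (e.symm : B →+* A)).map (e : A →+* B) = I := by
    rw [Ideal.map_map]
    simp
  rw [← hmap]
  refine Ideal.IsQInvertible.map_ringEquiv e (h _ (hfg.map _)
    ⟨e.symm r, Ideal.mem_map_of_mem (e.symm : B →+* A) hr,
      e.symm.map_mem_nonZeroDivisors_of_mem hr0⟩ ?_)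
  rwa [ringKrullDim_eq_of_ringEquiv (Ideal.quotientEquiv _ I e hmap.symm)]

/-! ### The equivalence -/

lemma algebraMap_localization_injective (R : Type*) [CommRing R] :
    Function.Injective (algebraMap R (Localization R⁰)) :=
  IsLocalization.injective _ le_rfl

lemma mem_nonZeroDivisors_of_radical {R : Type*} [CommRing R] {M : Ideal R} {a : R}
    (haM : M = (Ideal.span {a}).radical) (hreg : ∃ r ∈ M, r ∈ R⁰) : a ∈ R⁰ := by
  obtain ⟨r, hr, hr0⟩ := hreg
  rw [haM] at hr
  obtain ⟨k, hk⟩ := hr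
  obtain ⟨c, hc⟩ := Ideal.mem_span_singleton.1 hk
  have := pow_mem hr0 k
  rw [hc, mul_mem_nonZeroDivisors] at this
  exact this.1

lemma algebraMap_mem_nonZeroDivisors {R A T : Type*} [CommRing R] [CommRing A] [CommRing T]
    [Algebra R A] [Algebra R T] (φ : A →ₐ[R] T) (hφ : Function.Injective φ) {r : R}
    (hr : IsUnit (algebraMap R T r)) : algebraMap R A r ∈ A⁰ := by
  have hu : φ (algebraMap R A r) ∈ T⁰ := by
    rw [φ.commutes]
    exact hr.mem_nonZeroDivisors
  rw [mem_nonZeroDivisors_iff_right] at hu ⊢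
  intro x hx
  apply hφ
  rw [map_zero]
  exact hu _ (by rw [← map_mul, hx, map_zero])

/-- The hypotheses on `A` and `T` describe the integral closure `A` of `R` in `T = R[1 / a]`.
For `x : A` and `z = x / a ^ m`, `exists_unit_relation` gives a polynomial relation for `z` over
`R` with a unit coefficient, which `exists_of_aeval_eq_zero` turns into the hypothesis of
`mem_mul_colon`. -/
lemma pruferInDimZero_of_isIntegrallyClosedIn {R A T : Type*} [CommRing R] [IsLocalRing R]
    [CommRing A] [CommRing T] [Algebra R A] [Algebra R T] [Algebra A T] [IsScalarTower R A T]
    [IsIntegrallyClosedIn A T] [Algebra.IsIntegral R A]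
    (hfg : (IsLocalRing.maximalIdeal R).FG) (a : R) (ha : a ∈ R⁰)
    (haM : IsLocalRing.maximalIdeal R = (Ideal.span {a}).radical)
    (haT : IsUnit (algebraMap R T a))
    (hT : ∀ z : T, ∃ (k : ℕ) (c : R), z * algebraMap R T (a ^ k) = algebraMap R T c) :
    PruferInDimZero A := by
  have hinj : Function.Injective (algebraMap A T) :=
    IsIntegralClosure.algebraMap_injective A A T
  have ha' : a ∈ IsLocalRing.maximalIdeal R := by
    rw [haM]; exact Ideal.le_radical (Ideal.mem_span_singleton_self a)
  have hun : ∀ k, IsUnit (algebraMap R T (a ^ k)) := fun k ↦ by rw [map_pow]; exact haT.pow k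
  intro I hI _ hdim
  obtain ⟨m, hm⟩ := exists_pow_mem_of_dim_zero a ha' I hdim
  refine (isQInvertible_iff I).2 ⟨_, algebraMap_mem_nonZeroDivisors
    (IsScalarTower.toAlgHom R A T) hinj (hun m), mem_mul_colon _ (fun x ↦ ?_) I hI hm⟩
  obtain ⟨u, hu⟩ := (hun m).exists_left_inv
  obtain ⟨z, hz⟩ : ∃ z : T, z * algebraMap R T (a ^ m) = algebraMap A T x :=
    ⟨u * algebraMap A T x, by linear_combination algebraMap A T x * hu⟩
  obtain ⟨k, c, hc⟩ := hT z
  -- the exponent `k + 1` makes the denominator a nonunit with radical the maximal ideal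
  have hzc : z * algebraMap R T (a ^ (k + 1)) = algebraMap R T (c * a) := by
    rw [pow_succ, map_mul, map_mul, ← hc, mul_assoc]
  have haM' : IsLocalRing.maximalIdeal R = (Ideal.span {a ^ (k + 1)}).radical := by
    rw [← Ideal.span_singleton_pow, Ideal.radical_pow _ (Nat.succ_ne_zero _), haM]
  obtain ⟨n, r, ⟨i, hi⟩, hr⟩ := exists_unit_relation hfg _ (pow_mem ha (k + 1)) haM' (c * a)
  have hr' : ∑ j, algebraMap R T (r j) * z ^ (j : ℕ) = 0 := by
    refine ((hun (k + 1)).pow n).mul_left_eq_zero.1 ?_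
    have := congrArg (algebraMap R T) hr
    rw [map_sum, map_zero] at this
    rw [← this, Finset.sum_mul]
    refine Finset.sum_congr rfl fun j _ ↦ ?_
    rw [map_mul, map_mul, map_pow _ (c * a), ← hzc, mul_pow, map_pow _ _ (n - _),
      mul_assoc, mul_assoc, ← pow_add, Nat.add_sub_of_le (by omega)]
  let g : Polynomial A := ∑ j : Fin (n + 1), Polynomial.monomial (j : ℕ) (algebraMap R A (r j))
  have hg0 : Polynomial.aeval z g = 0 := by
    rw [map_sum, ← hr']
    simp only [Polynomial.aeval_monomial, ← IsScalarTower.algebraMap_apply]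
  have hgi : g.coeff i = algebraMap R A (r i) := by
    simp only [g, Polynomial.finsetSum_coeff, Polynomial.coeff_monomial]
    rw [Finset.sum_eq_single i]
    · simp
    · intro j _ hj
      rw [if_neg (fun h ↦ hj (Fin.ext h))]
    · simp
  obtain ⟨p, q, p', q', h1, h2, h3⟩ := exists_of_aeval_eq_zero z _ g le_rfl hg0 i
  rw [hgi] at h3
  obtain ⟨v, hv⟩ := hi.exists_left_inv
  have hv' := congrArg (algebraMap R A) hv
  rw [map_mul, map_one, ← h3] at hv'
  have hmul : ∀ w w' : A, z * algebraMap A T w = algebraMap A T w' →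
      x * w = algebraMap R A (a ^ m) * w' := by
    intro w w' h
    apply hinj
    rw [map_mul, map_mul, ← h, ← hz, ← IsScalarTower.algebraMap_apply]
    ring
  refine ⟨algebraMap R A v * p, algebraMap R A v * q, algebraMap R A v * p',
    algebraMap R A v * q', ?_, ?_, ?_⟩
  · linear_combination algebraMap R A v * hmul _ _ h1
  · linear_combination algebraMap R A v * hmul _ _ h2
  · linear_combination hv'

/-- Let `R` be a local ring with finitely generated regular maximal ideal `M`, and let `R'`
be the integral closure of `R` in the Nagata transform `T(M)`.  The following are
equivalent: (1) `M` is the radical of a principal ideal; (2) `R'` is Prüfer in dimension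
zero; (3) some integral overring of `R` is Prüfer in dimension zero. -/
theorem pre_stable_prufer {R : Type*} [CommRing R] [IsLocalRing R]
    (hfg : (IsLocalRing.maximalIdeal R).FG)
    (hreg : ∃ r ∈ IsLocalRing.maximalIdeal R, r ∈ R⁰) :
    List.TFAE
      [∃ a : R, IsLocalRing.maximalIdeal R = (Ideal.span {a}).radical,
       PruferInDimZero
         (integralClosure R (nagataTransform R (IsLocalRing.maximalIdeal R))),
       ∃ S : Subalgebra R (Localization R⁰), Algebra.IsIntegral R S ∧
         PruferInDimZero S] := by
  tfae_have 1 → 2 := by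
    rintro ⟨a, haM⟩
    have ha := mem_nonZeroDivisors_of_radical haM hreg
    have haQ := IsLocalization.map_units (Localization R⁰) (⟨a, ha⟩ : R⁰)
    have hmem := mem_nagataTransform_iff hfg a haM
    set T := nagataTransform R (IsLocalRing.maximalIdeal R)
    obtain ⟨u, hu⟩ := haQ.exists_left_inv
    refine pruferInDimZero_of_isIntegrallyClosedIn (T := T) hfg a ha haM ?_ ?_
    · refine IsUnit.of_mul_eq_one_right ⟨u, (hmem u).2 ⟨1, 1, ?_⟩⟩ (Subtype.ext hu)
      rw [pow_one, map_one]
      exact hu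
    · intro z
      obtain ⟨k, c, h⟩ := (hmem z).1 z.2
      exact ⟨k, c, Subtype.ext h⟩
  tfae_have 2 → 3 := by
    -- `R'` is a subring of the Nagata transform and is replaced by its image in `Q(R)`
    intro h
    let T := nagataTransform R (IsLocalRing.maximalIdeal R)
    let e := (integralClosure R T).equivMapOfInjective T.val Subtype.val_injective
    exact ⟨(integralClosure R T).map T.val, (AlgEquiv.isIntegral_iff (A := integralClosure R T)
        (B := (integralClosure R T).map T.val) e).1 inferInstance,
      h.of_ringEquiv e.toRingEquiv⟩
  tfae_have 3 → 1 := by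
    rintro ⟨S, hS, h⟩
    obtain ⟨r, hr, hr0⟩ := hreg
    have hinj : Function.Injective (algebraMap R S) := fun x y hxy ↦
      algebraMap_localization_injective R (congrArg Subtype.val hxy)
    obtain ⟨b, hb, hbI⟩ := (isQInvertible_iff _).1 (h _ (hfg.map (algebraMap R S))
      ⟨algebraMap R S r, Ideal.mem_map_of_mem _ hr,
        algebraMap_mem_nonZeroDivisors S.val Subtype.val_injective
          (IsLocalization.map_units (Localization R⁰) (⟨r, hr0⟩ : R⁰))⟩
      ringKrullDim_quotient_map_le_zero)
    exact exists_radical_of_mem_mul_colon hinj hfg b hb hbI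
  tfae_finish
end

section
/- Let R be a local ring with finitely generated regular maximal ideal M, and let R̄ be the integral closure of R in the total quotient ring Q(R). The following are equivalent: (1) M is the radical of a principal ideal of R; (2) every M-primary ideal of R extends to a principal ideal of R̄; (3) the Jacobson radical Jac R̄ of R̄ is the radical of a principal ideal of R̄. -/
/-!
The argument takes place in the integral closure `S` of a ring `T` in `T[1/a]` (`closureAway`),
where `a` is a unit of the total quotient ring and each `T ⧸ (a ^ n)` is Artinian.  The ring
`S ⧸ (a)` is then Artinian as well (`isArtinianRing_quotient_overring`): some `n` works for all
elements of `S` in the sense that modulo `a S` they are fractions with denominator `a ^ n`, so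
`S ⧸ (a)` is a finite `T`-module.  If `a` lies in all maximal ideals of `S`, then `S` is semilocal,
and since `S` is integrally closed in `S[1/a]`, the maximal ideal of each localization of `S` at a
maximal ideal `N` is generated by a nonzerodivisor `ν` (`exists_isLocUnif`).  So there is an order
function at every `N`; the elements of infinite order form a prime ideal (`infOrder_isPrime`)
which does not contain `a`.

(1) ⇒ (2).  Let `M` be the radical of `(a)`.  As `M` is finitely generated, a power of `M` lies in
`(a)`, hence `a` is a nonzerodivisor and the above applies to `T = R`.  An `M`-primary ideal contains
a power of `a`, so its extension to `S` has finite order at every maximal ideal.  By the Chinese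
remainder theorem it has an element attaining the minimal order everywhere, and such an element
generates it (`isPrincipal_of_locUnif`).  Since `S ⊆ R̄`, its extension to `R̄` is principal too.

(2) ⇒ (3).  `Jac R̄` is the radical of `M R̄`, as `R̄` is integral over the local ring `R`
(`jacobson_eq_radical_map`).

(3) ⇒ (1).  If `Jac R̄` is the radical of `(x)`, then `M ^ k R̄ ⊆ (x)` for some `k`.  Adjoining to `R`
the element `x` and the quotients by `x` of generators of `M ^ k` gives a finite extension `T` of
`R` with `M ^ k T ⊆ x T`, to which the above applies with `a = x`.  The primes of elements of
infinite order at the finitely many maximal ideals of `S` are not maximal, so their contractions to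
`R` are different from `M`; by prime avoidance, `M` has an element `r` outside all of them.  A prime of `S`
containing the image of `r` contains the local uniformizer at any maximal ideal `N` above it, hence
equals `N`.  By lying over, `M` is the only prime of `R` containing `r`
(`exists_radical_eq`).
-/

set_option synthInstance.maxHeartbeats 400000
set_option maxHeartbeats 800000

open scoped nonZeroDivisors

/-! ### Local divisibility and the valuation at a maximal ideal -/

/-- The elements of `S` which `x` divides after localizing at the prime `N`. -/
def locDvd {S : Type*} [CommRing S] (N : Ideal S) [hN : N.IsPrime] (x : S) : Ideal S where
  carrier := {z | ∃ w, w ∉ N ∧ x ∣ w * z}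
  zero_mem' := ⟨1, fun h => hN.ne_top ((Ideal.eq_top_iff_one N).2 h), by simp⟩
  add_mem' := by
    rintro y z ⟨w, hw, hy⟩ ⟨w', hw', hz⟩
    refine ⟨w * w', fun h => (hN.mem_or_mem h).elim hw hw', ?_⟩
    have : w * w' * (y + z) = w' * (w * y) + w * (w' * z) := by ring
    rw [this]
    exact dvd_add (hy.mul_left _) (hz.mul_left _)
  smul_mem' := by
    rintro c z ⟨w, hw, hz⟩
    refine ⟨w, hw, ?_⟩
    have : w * (c • z) = c * (w * z) := by simp only [smul_eq_mul]; ring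
    rw [this]
    exact hz.mul_left _

lemma mem_locDvd {S : Type*} [CommRing S] {N : Ideal S} [N.IsPrime] {x z : S} :
    z ∈ locDvd N x ↔ ∃ w, w ∉ N ∧ x ∣ w * z := Iff.rfl

/-- `ν` is a local uniformizer at `N`: in the localization of `S` at `N`, the image of `ν` is a
nonzerodivisor generating the maximal ideal.  Both properties are witnessed by one denominator. -/
def IsLocUnif {S : Type*} [CommRing S] (N : Ideal S) (ν : S) : Prop :=
  ν ∈ N ∧ ∃ w, w ∉ N ∧ (∀ z ∈ N, ν ∣ w * z) ∧ ∀ z, ν * z = 0 → w * z = 0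

/-- The elements of infinite order at `N`, the order being measured by `ν`. -/
def infOrder {S : Type*} [CommRing S] (N : Ideal S) [N.IsPrime] (ν : S) : Ideal S :=
  ⨅ n : ℕ, locDvd N (ν ^ n)

section Valuation

variable {S : Type*} [CommRing S] {N : Ideal S} [hN : N.IsPrime] {ν : S}

lemma locDvd_pow_zero : locDvd N (ν ^ 0) = ⊤ := by
  rw [Ideal.eq_top_iff_one, mem_locDvd]
  exact ⟨1, fun h => hN.ne_top ((Ideal.eq_top_iff_one N).2 h), by simp⟩

/-- An ideal not contained in `infOrder N ν` has a well-defined finite order at `N`. -/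
lemma exists_order {I : Ideal S} (hI : ¬ I ≤ infOrder N ν) :
    ∃ n, I ≤ locDvd N (ν ^ n) ∧ ¬ I ≤ locDvd N (ν ^ (n + 1)) := by
  classical
  have hex : ∃ n, ¬ I ≤ locDvd N (ν ^ n) := by
    by_contra! h
    exact hI (le_iInf h)
  have h0 : Nat.find hex ≠ 0 := by
    intro h
    have := Nat.find_spec hex
    rw [h, locDvd_pow_zero] at this
    exact this le_top
  obtain ⟨n, hn⟩ := Nat.exists_eq_succ_of_ne_zero h0
  refine ⟨n, ?_, ?_⟩
  · by_contra h
    have := Nat.find_min' hex h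
    omega
  · have := Nat.find_spec hex
    rwa [hn] at this

/-- An element of exact order `n` is locally a unit times `ν ^ n`. -/
lemma exists_unit_of_order {n : ℕ} {z : S} (h : z ∈ locDvd N (ν ^ n))
    (h' : z ∉ locDvd N (ν ^ (n + 1))) (hν : IsLocUnif N ν) :
    ∃ w b, w ∉ N ∧ b ∉ N ∧ w * z = ν ^ n * b := by
  obtain ⟨w, hw, b, hb⟩ := h
  refine ⟨w, b, hw, fun hbN => h' ?_, hb⟩
  obtain ⟨-, w0, hw0, hdvd, -⟩ := hν
  obtain ⟨c, hc⟩ := hdvd b hbN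
  refine ⟨w0 * w, fun h => (hN.mem_or_mem h).elim hw0 hw, c, ?_⟩
  calc w0 * w * z = w0 * (w * z) := by ring
    _ = ν ^ n * (w0 * b) := by rw [hb]; ring
    _ = _ := by rw [hc]; ring

lemma notMem_of_eq {n : ℕ} {z w b : S} (hb : b ∉ N) (h : w * z = ν ^ n * b)
    (hν : IsLocUnif N ν) : z ∉ locDvd N (ν ^ (n + 1)) := by
  rintro ⟨w', hw', c, hc⟩
  obtain ⟨hνN, w0, hw0, -, hreg⟩ := hν
  have key : ∀ m : ℕ, ∀ y, ν ^ m * y = 0 → w0 ^ m * y = 0 := by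
    intro m
    induction m with
    | zero => intro y hy; simpa using hy
    | succ k ih =>
      intro y hy
      have h1 : ν * (w0 ^ k * y) = 0 := by
        have := ih (ν * y) (by rw [← hy]; ring)
        rw [← this]; ring
      rw [← hreg _ h1]; ring
  have h2 : ν ^ n * (w' * b - w * ν * c) = 0 := by
    have e1 : w' * (ν ^ n * b) = w' * (w * z) := by rw [h]
    have e2 : w * (w' * z) = w * (ν ^ (n + 1) * c) := by rw [hc]
    linear_combination e1 + e2
  have h3 := key n _ h2
  have h4 : w' * b - w * ν * c ∈ N := by
    have : w0 ^ n * (w' * b - w * ν * c) ∈ N := by rw [h3]; exact N.zero_mem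
    exact (hN.mem_or_mem this).resolve_left fun h => hw0 (hN.mem_of_pow_mem _ h)
  have h5 : w' * b ∈ N := by
    have : w * ν * c ∈ N := N.mul_mem_right _ (N.mul_mem_left _ hνN)
    simpa using N.add_mem h4 this
  exact (hN.mem_or_mem h5).elim hw' hb

lemma notMem_infOrder_iff (hν : IsLocUnif N ν) {z : S} :
    z ∉ infOrder N ν ↔ ∃ n w b, w ∉ N ∧ b ∉ N ∧ w * z = ν ^ n * b := by
  constructor
  · intro h
    have h1 : ¬ Ideal.span {z} ≤ infOrder N ν := by
      rwa [Ideal.span_singleton_le_iff_mem]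
    obtain ⟨n, hn, hn'⟩ := exists_order h1
    rw [Ideal.span_singleton_le_iff_mem] at hn hn'
    obtain ⟨w, b, h⟩ := exists_unit_of_order hn hn' hν
    exact ⟨n, w, b, h⟩
  · rintro ⟨n, w, b, -, hb, h⟩ hz
    exact notMem_of_eq hb h hν ((Ideal.mem_iInf.1 hz) (n + 1))

/-- Orders add up under multiplication, so the elements of infinite order form a prime. -/
lemma infOrder_isPrime (hν : IsLocUnif N ν) : (infOrder N ν).IsPrime := by
  rw [Ideal.isPrime_iff]
  constructor
  · rw [Ne, Ideal.eq_top_iff_one, notMem_infOrder_iff hν]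
    have h1 : (1 : S) ∉ N := fun h => hN.ne_top ((Ideal.eq_top_iff_one N).2 h)
    exact ⟨0, 1, 1, h1, h1, by simp⟩
  · intro y z hyz
    by_contra! h
    rw [notMem_infOrder_iff hν, notMem_infOrder_iff hν] at h
    obtain ⟨⟨n, w, b, hw, hb, h⟩, n', w', b', hw', hb', h'⟩ := h
    refine (notMem_infOrder_iff hν).2 ⟨n + n', w * w', b * b', ?_, ?_, ?_⟩ hyz
    · exact fun h => (hN.mem_or_mem h).elim hw hw'
    · exact fun h => (hN.mem_or_mem h).elim hb hb'
    · calc w * w' * (y * z) = (w * y) * (w' * z) := by ring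
        _ = _ := by rw [h, h']; ring

lemma infOrder_le (hν : IsLocUnif N ν) : infOrder N ν ≤ N := by
  intro z hz
  by_contra hzN
  have h1 : (1 : S) ∉ N := fun h => hN.ne_top ((Ideal.eq_top_iff_one N).2 h)
  exact (notMem_infOrder_iff hν).2 ⟨0, 1, z, h1, hzN, by simp⟩ hz

lemma infOrder_not_isMaximal (hν : IsLocUnif N ν) : ¬ (infOrder N ν).IsMaximal := by
  intro hmax
  have h1 : (1 : S) ∉ N := fun h => hN.ne_top ((Ideal.eq_top_iff_one N).2 h)
  have h2 := hmax.eq_of_le hN.ne_top (infOrder_le hν)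
  refine (notMem_infOrder_iff hν (z := ν)).2 ⟨1, 1, 1, h1, h1, by simp⟩ ?_
  rw [h2]
  exact hν.1

end Valuation

/-- In a semilocal ring with local uniformizers, an ideal of finite order everywhere is principal:
by the Chinese remainder theorem it has an element of minimal order at all maximal ideals
simultaneously, and such an element generates it locally. -/
lemma isPrincipal_of_locUnif {S : Type*} [CommRing S] [Finite (MaximalSpectrum S)]
    (ν : MaximalSpectrum S → S) (hν : ∀ N : MaximalSpectrum S, IsLocUnif N.asIdeal (ν N))
    (I : Ideal S) (hI : ∀ N : MaximalSpectrum S, ¬ I ≤ infOrder N.asIdeal (ν N)) :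
    I.IsPrincipal := by
  classical
  have := Fintype.ofFinite (MaximalSpectrum S)
  choose n hn hn' using fun N => exists_order (hI N)
  have hy : ∀ N, ∃ y ∈ I, y ∉ locDvd N.asIdeal (ν N ^ (n N + 1)) := fun N =>
    Set.not_subset.1 (hn' N)
  choose y hyI hy using hy
  have he : ∀ N : MaximalSpectrum S, ∃ e, e ∉ N.asIdeal ∧
      ∀ N' : MaximalSpectrum S, N' ≠ N → e ∈ N'.asIdeal := by
    intro N
    have : ¬ (Finset.univ.erase N).inf MaximalSpectrum.asIdeal ≤ N.asIdeal := by
      rw [N.isMaximal.isPrime.inf_le']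
      rintro ⟨N', hN', hle⟩
      exact (Finset.ne_of_mem_erase hN')
        (MaximalSpectrum.ext (N'.isMaximal.eq_of_le N.isMaximal.ne_top hle))
    obtain ⟨e, he, heN⟩ := Set.not_subset.1 this
    refine ⟨e, heN, fun N' hN' => ?_⟩
    exact (Submodule.mem_finsetInf.1 he) N' (Finset.mem_erase.2 ⟨hN', Finset.mem_univ _⟩)
  choose e he he' using he
  set t : S := ∑ N, e N * y N with ht
  have htI : t ∈ I := I.sum_mem fun N _ => I.mul_mem_left _ (hyI N)
  have htN : ∀ N, t ∉ locDvd N.asIdeal (ν N ^ (n N + 1)) := by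
    intro N hmem
    have hrest : ∑ N' ∈ Finset.univ.erase N, e N' * y N' ∈
        locDvd N.asIdeal (ν N ^ (n N + 1)) := by
      refine Ideal.sum_mem _ fun N' hN' => ?_
      obtain ⟨w, hw, c, hc⟩ := hn N (hyI N')
      obtain ⟨-, w0, hw0, hdvd, -⟩ := hν N
      obtain ⟨d, hd⟩ := hdvd (e N') (he' N' N (Finset.ne_of_mem_erase hN').symm)
      refine ⟨w0 * w, fun h => (N.isMaximal.isPrime.mem_or_mem h).elim hw0 hw, d * c, ?_⟩
      calc w0 * w * (e N' * y N') = (w0 * e N') * (w * y N') := by ring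
        _ = _ := by rw [hd, hc]; ring
    rw [ht, ← Finset.add_sum_erase _ _ (Finset.mem_univ N)] at hmem
    obtain ⟨w, hw, hdvd⟩ := (Submodule.add_mem_iff_left _ hrest).1 hmem
    refine hy N ⟨w * e N, fun h => (N.isMaximal.isPrime.mem_or_mem h).elim hw (he N), ?_⟩
    rwa [mul_assoc]
  refine ⟨⟨t, le_antisymm ?_ ((Ideal.span_singleton_le_iff_mem _).2 htI)⟩⟩
  intro z hz
  -- the ideal of denominators `s` with `s * z` divisible by `t` lies in no maximal ideal
  by_contra hzt
  let J : Ideal S := Submodule.comap (LinearMap.toSpanSingleton S S z) (Ideal.span {t})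
  have hJ : ∀ s, s ∈ J ↔ t ∣ s * z := fun s => by
    simp [J, Ideal.mem_span_singleton]
  have hJtop : J ≠ ⊤ := by
    intro h
    apply hzt
    have := (hJ 1).1 (h ▸ Submodule.mem_top)
    rw [one_mul] at this
    exact Ideal.mem_span_singleton.2 this
  obtain ⟨N, hNmax, hJN⟩ := Ideal.exists_le_maximal J hJtop
  obtain ⟨N, rfl⟩ : ∃ N' : MaximalSpectrum S, N'.asIdeal = N := ⟨⟨N, hNmax⟩, rfl⟩
  obtain ⟨w, b, hw, hb, hwb⟩ := exists_unit_of_order (hn N htI) (htN N) (hν N)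
  obtain ⟨w', hw', c, hc⟩ := hn N hz
  have : b * w' ∈ J := (hJ _).2 ⟨w * c, by
    calc b * w' * z = b * (w' * z) := by ring
      _ = c * (ν N ^ n N * b) := by rw [hc]; ring
      _ = _ := by rw [← hwb]; ring⟩
  exact (N.isMaximal.isPrime.mem_or_mem (hJN this)).elim hb hw'

/-! ### Overrings of a ring which is Artinian modulo a nonzerodivisor -/

lemma fg_of_isNoetherianRing_quotient {T : Type*} [CommRing T] (x : T)
    [IsNoetherianRing (T ⧸ Ideal.span {x})] {D : Ideal T} (hx : x ∈ D) : D.FG := by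
  apply Ideal.fg_of_fg_map_of_fg_inf_ker_of_surjective (f := Ideal.Quotient.mk (Ideal.span {x}))
  · exact IsNoetherian.noetherian _
  · rw [Ideal.mk_ker, inf_eq_right.2 ((Ideal.span_singleton_le_iff_mem _).2 hx)]
    exact ⟨{x}, by simp⟩
  · exact Ideal.Quotient.mk_surjective

section Overring

variable {T S : Type*} [CommRing T] [CommRing S] [Algebra T S]

/-- If `T ⧸ (a)` is Artinian and every element of `S` is carried into `T` by a power of `a`, then
for a fixed `n` every element of `S` is congruent modulo `a S` to one carried into `T` by `a ^ n`.
The point is that the `a`-torsion of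
`S ⧸ T` embeds into `T ⧸ (a)`, so the chain of its intersections with `a ^ k (S ⧸ T)`
stabilizes. -/
lemma exists_uniform_denominator (a : T)
    (hreg : ∀ s : S, algebraMap T S a * s = 0 → s = 0)
    [IsArtinianRing (T ⧸ Ideal.span {a})]
    (hden : ∀ s : S, ∃ n : ℕ, ∃ t : T, algebraMap T S a ^ n * s = algebraMap T S t) :
    ∃ n : ℕ, ∀ s : S, ∃ s' : S, ∃ t : T,
      algebraMap T S a ^ n * (s - algebraMap T S a * s') = algebraMap T S t := by
  set α := algebraMap T S a with hα
  let mk := Ideal.Quotient.mk (Ideal.span {a})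
  let C : ℕ → Ideal T := fun k => (Ideal.span {α ^ (k + 1)}).comap (algebraMap T S)
  have hC : ∀ k t, t ∈ C k ↔ ∃ s, algebraMap T S t = α ^ (k + 1) * s := fun k t => by
    simp only [C, Ideal.mem_comap, Ideal.mem_span_singleton]; rfl
  let f : ℕ →o (Ideal (T ⧸ Ideal.span {a}))ᵒᵈ :=
    { toFun := fun k => OrderDual.toDual ((C k).map mk)
      monotone' := fun i j hij => Ideal.map_mono (Ideal.comap_mono
        (Ideal.span_singleton_le_span_singleton.2 (pow_dvd_pow _ (by omega)))) }
  obtain ⟨n, hn⟩ := IsArtinian.monotone_stabilizes f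
  have step : ∀ m, n ≤ m → ∀ t ∈ C m, ∃ t' ∈ C (m + 1), ∃ c, t = t' + a * c := by
    intro m hm t ht
    have h1 : (C m).map mk = (C (m + 1)).map mk :=
      ((hn m hm).symm.trans (hn (m + 1) (by omega)) : f m = f (m + 1))
    have h2 : mk t ∈ (C (m + 1)).map mk := h1 ▸ Ideal.mem_map_of_mem mk ht
    obtain ⟨t', ht', he⟩ :=
      (Ideal.mem_map_iff_of_surjective mk Ideal.Quotient.mk_surjective).1 h2
    obtain ⟨c, hc⟩ := Ideal.mem_span_singleton.1 (Ideal.Quotient.eq.1 he.symm)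
    exact ⟨t', ht', c, by rw [← hc]; ring⟩
  have main : ∀ k : ℕ, ∀ s : S, (∃ t, α ^ k * (α ^ n * s) = algebraMap T S t) →
      ∃ s' : S, ∃ t : T, α ^ n * (s - α * s') = algebraMap T S t := by
    intro k
    induction k with
    | zero =>
      rintro s ⟨t, ht⟩
      exact ⟨0, t, by rw [← ht]; ring⟩
    | succ k ih =>
      rintro s ⟨t, ht⟩
      obtain ⟨t', ht', c, hc⟩ := step (n + k) (by omega) t
        ((hC _ _).2 ⟨s, by rw [← ht]; ring⟩)
      obtain ⟨s₁, hs₁⟩ := (hC _ _).1 ht'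
      obtain ⟨s', t'', h⟩ := ih (s - α * s₁) ⟨c, by
        rw [← sub_eq_zero]
        apply hreg
        rw [hc, map_add, map_mul, hs₁, ← hα] at ht
        linear_combination ht⟩
      exact ⟨s₁ + s', t'', by rw [← h]; ring⟩
  refine ⟨n, fun s => ?_⟩
  obtain ⟨k, t, ht⟩ := hden s
  exact main k s ⟨a ^ n * t, by rw [map_mul, map_pow, ← ht]; ring⟩

lemma isArtinianRing_quotient_overring (a : T)
    (hreg : ∀ s : S, algebraMap T S a * s = 0 → s = 0)
    (hart : ∀ n : ℕ, IsArtinianRing (T ⧸ Ideal.span {a ^ n}))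
    (hden : ∀ s : S, ∃ n : ℕ, ∃ t : T, algebraMap T S a ^ n * s = algebraMap T S t) :
    IsArtinianRing (S ⧸ Ideal.span {algebraMap T S a}) := by
  have hart1 : IsArtinianRing (T ⧸ Ideal.span {a}) := by
    have := hart 1
    rwa [pow_one] at this
  obtain ⟨n, hn⟩ := exists_uniform_denominator a hreg hden
  set α := algebraMap T S a with hα
  let g : S →ₗ[T] S := LinearMap.mulLeft T (α ^ n)
  have hg : Function.Injective g := by
    have key : ∀ m : ℕ, ∀ s : S, α ^ m * s = 0 → s = 0 := by
      intro m
      induction m with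
      | zero => intro s hs; simpa using hs
      | succ k ih => intro s hs; exact ih s (hreg _ (by rw [← hs]; ring))
    exact (injective_iff_map_eq_zero g).2 fun s hs => key n s hs
  let E : Submodule T S := (LinearMap.range (Algebra.linearMap T S)).comap g
  -- `a ^ n E` is the image of an ideal of `T` containing `a ^ n`
  have hE : E.FG := by
    apply Submodule.fg_of_fg_map_injective g hg
    let D : Ideal T := (LinearMap.range g).comap (Algebra.linearMap T S)
    have hD : D.FG := by
      have := hart n
      exact fg_of_isNoetherianRing_quotient (a ^ n) (D := D) ⟨1, by simp [g, hα]⟩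
    have hmap : E.map g = Submodule.map (Algebra.linearMap T S) D := by
      ext s
      constructor
      · rintro ⟨e, ⟨t, ht⟩, rfl⟩
        exact ⟨t, ⟨e, ht.symm⟩, ht⟩
      · rintro ⟨t, ⟨e, he⟩, rfl⟩
        exact ⟨e, ⟨t, he.symm⟩, he⟩
    rw [hmap]
    exact Submodule.FG.map _ hD
  have hfin : Module.Finite T (S ⧸ Ideal.span {α}) := by
    let q : S →ₗ[T] S ⧸ Ideal.span {α} := (Ideal.Quotient.mkₐ T (Ideal.span {α})).toLinearMap
    have htop : E.map q = ⊤ := by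
      rw [eq_top_iff]
      intro x _
      obtain ⟨s, rfl⟩ := Ideal.Quotient.mk_surjective x
      obtain ⟨s', t, h⟩ := hn s
      refine ⟨s - α * s', ⟨t, h.symm⟩, ?_⟩
      refine Ideal.Quotient.eq.2 ?_
      rw [Ideal.mem_span_singleton]
      exact ⟨-s', by ring⟩
    exact ⟨htop ▸ hE.map q⟩
  let _ : Algebra (T ⧸ Ideal.span {a}) (S ⧸ Ideal.span {α}) :=
    Ideal.Quotient.algebraQuotientOfLEComap (by
      rw [Ideal.span_singleton_le_iff_mem]
      exact Ideal.mem_span_singleton_self _)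
  have : IsScalarTower T (T ⧸ Ideal.span {a}) (S ⧸ Ideal.span {α}) :=
    IsScalarTower.of_algebraMap_eq' rfl
  have : Module.Finite (T ⧸ Ideal.span {a}) (S ⧸ Ideal.span {α}) :=
    Module.Finite.of_restrictScalars_finite T _ _
  exact IsArtinianRing.of_finite (T ⧸ Ideal.span {a}) (S ⧸ Ideal.span {α})

end Overring

/-- The maximal ideals of `S` containing a nonzerodivisor `α` have local uniformizers, if
`S ⧸ (α)` is Artinian and `S` is integrally closed in `S[1/α]`.  Here the second condition is
phrased by saying that `b / α` lies in `S` as soon as it maps a finitely generated ideal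
containing `α` to itself.  An element `b` outside `(α)` with `b N ⊆ (α)` makes `b / α` map `N`
into `S` but not into `N`, hence some element of `N` is mapped to a unit at `N`. -/
lemma exists_isLocUnif {S : Type*} [CommRing S] (α : S) (hreg : ∀ s : S, α * s = 0 → s = 0)
    [IsArtinianRing (S ⧸ Ideal.span {α})]
    (hic : ∀ (b : S) (J : Ideal S), J.FG → α ∈ J →
      (∀ z ∈ J, ∃ z' ∈ J, b * z = α * z') → α ∣ b)
    (N : Ideal S) [hN : N.IsMaximal] (hα : α ∈ N) : ∃ ν, IsLocUnif N ν := by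
  let mk := Ideal.Quotient.mk (Ideal.span {α})
  have hker : Ideal.span {α} ≤ N := (Ideal.span_singleton_le_iff_mem _).2 hα
  have hsurj : Function.Surjective mk := Ideal.Quotient.mk_surjective
  have hcomap : (N.map mk).comap mk = N := by
    rw [Ideal.comap_map_of_surjective' _ hsurj, Ideal.mk_ker, sup_eq_left]
    exact hker
  have hNfg : N.FG := fg_of_isNoetherianRing_quotient α hα
  have hN' : (N.map mk).IsMaximal := by
    refine (Ideal.map_eq_top_or_isMaximal_of_surjective mk hsurj hN).resolve_left fun h => ?_
    rw [h, Ideal.comap_top] at hcomap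
    exact hN.ne_top hcomap.symm
  obtain ⟨b, hb, hbN⟩ : ∃ b, ¬ α ∣ b ∧ ∀ z ∈ N, α ∣ b * z := by
    have hass : N.map mk ∈ associatedPrimes (S ⧸ Ideal.span {α}) (S ⧸ Ideal.span {α}) := by
      apply Module.associatedPrimes.minimalPrimes_annihilator_subset_associatedPrimes
      refine ⟨⟨hN'.isPrime, ?_⟩, fun q hq hle => ?_⟩
      · intro x hx
        have := Module.mem_annihilator.1 hx 1
        rw [smul_eq_mul, mul_one] at this
        rw [this]
        exact Ideal.zero_mem _
      · have := hq.1
        exact ((IsArtinianRing.isMaximal_of_isPrime q).eq_of_le hN'.ne_top hle).ge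
    obtain ⟨-, x, hx⟩ := isAssociatedPrime_iff.1 hass
    obtain ⟨b, rfl⟩ := hsurj x
    refine ⟨b, fun hb => hN'.ne_top ?_, fun z hz => ?_⟩
    · have hb0 : Ideal.Quotient.mk (Ideal.span {α}) b = 0 :=
        Ideal.Quotient.eq_zero_iff_dvd _ _ |>.2 hb
      rw [hx, Ideal.eq_top_iff_one, Submodule.mem_colon_singleton]
      simp [mk, hb0]
    · have h1 : mk z ∈ N.map mk := Ideal.mem_map_of_mem mk hz
      rw [hx, Submodule.mem_colon_singleton, smul_eq_mul, ← map_mul, Submodule.mem_bot] at h1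
      rw [mul_comm]
      exact Ideal.Quotient.eq_zero_iff_dvd _ _ |>.1 h1
  by_contra hno
  refine hb (hic b N hNfg hα fun z hz => ?_)
  obtain ⟨w, hw⟩ := hbN z hz
  refine ⟨w, ?_, hw⟩
  by_contra hwN
  refine hno ⟨z, hz, w, hwN, fun y hy => ?_, fun y hy => ?_⟩
  · obtain ⟨c, hc⟩ := hbN y hy
    refine ⟨c, ?_⟩
    rw [← sub_eq_zero]
    apply hreg
    linear_combination z * hc - y * hw
  · apply hreg
    linear_combination b * hy - y * hw

/-! ### The integral closure in the localization at one element -/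

/-- The integral closure of `T` in the part `T[1/a]` of `Q`, for an element `a` of `T` which is a
unit in `Q`.  Unlike the full integral closure of `T` in `Q`, it is controlled by `T ⧸ (a)`. -/
def closureAway (T Q : Type*) [CommRing T] [CommRing Q] [Algebra T Q] (a : T) :
    Subalgebra T Q where
  carrier := {z | IsIntegral T z ∧
    ∃ n : ℕ, ∃ t : T, algebraMap T Q a ^ n * z = algebraMap T Q t}
  mul_mem' := by
    rintro y z ⟨hy, n, t, h⟩ ⟨hz, n', t', h'⟩
    refine ⟨hy.mul hz, n + n', t * t', ?_⟩
    rw [map_mul, ← h, ← h']; ring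
  add_mem' := by
    rintro y z ⟨hy, n, t, h⟩ ⟨hz, n', t', h'⟩
    refine ⟨hy.add hz, n + n', a ^ n' * t + a ^ n * t', ?_⟩
    rw [map_add, map_mul, map_mul, map_pow, map_pow, ← h, ← h']; ring
  algebraMap_mem' := fun t => ⟨isIntegral_algebraMap, 0, t, by simp⟩

section ClosureAway

variable {T Q : Type*} [CommRing T] [CommRing Q] [Algebra T Q] {a : T}

lemma mem_closureAway {z : Q} : z ∈ closureAway T Q a ↔ IsIntegral T z ∧
    ∃ n : ℕ, ∃ t : T, algebraMap T Q a ^ n * z = algebraMap T Q t := Iff.rfl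

instance : Algebra.IsIntegral T (closureAway T Q a) :=
  ⟨fun z => (isIntegral_algHom_iff (closureAway T Q a).val Subtype.val_injective).1 z.2.1⟩

/-- A fraction mapping to itself a finitely generated ideal that contains a unit of `Q` is
integral, by the Cayley-Hamilton theorem. -/
lemma isIntegral_of_mul_mem {S : Subalgebra T Q} {α : S} (hα : IsUnit (α : Q)) {J : Ideal S}
    (hJ : J.FG) (hαJ : α ∈ J) (u : Q) (hu : ∀ z ∈ J, ∃ z' ∈ J, u * (z : Q) = (z' : Q)) :
    IsIntegral S u := by
  let N : Submodule S Q := Submodule.map (Algebra.linearMap S Q) J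
  have hN : N.FG := Submodule.FG.map _ hJ
  have hfin : Module.Finite S N := Module.Finite.iff_fg.2 hN
  have hmaps : ∀ x ∈ N, LinearMap.mulLeft S u x ∈ N := by
    rintro _ ⟨z, hz, rfl⟩
    obtain ⟨z', hz', h⟩ := hu z hz
    exact ⟨z', hz', h.symm⟩
  let f : Module.End S N := (LinearMap.mulLeft S u).restrict hmaps
  obtain ⟨p, hp, hpf⟩ := LinearMap.exists_monic_and_aeval_eq_zero S f
  refine ⟨p, hp, ?_⟩
  have hpow : ∀ (n : ℕ) (x : N), (((f ^ n) x : N) : Q) = u ^ n * x := by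
    intro n
    induction n with
    | zero => intro x; simp
    | succ k ih =>
      intro x
      rw [pow_succ', Module.End.mul_apply, pow_succ', mul_assoc, ← ih]
      rfl
  have hαN : (α : Q) ∈ N := ⟨α, hαJ, rfl⟩
  have h1 : (((Polynomial.aeval f p) ⟨α, hαN⟩ : N) : Q) = Polynomial.aeval u p * α := by
    rw [Polynomial.aeval_endomorphism, Polynomial.aeval_eq_sum_range, Polynomial.sum_over_range]
    · simp only [AddSubmonoidClass.coe_finsetSum, Submodule.coe_smul, hpow, Finset.sum_mul,
        smul_mul_assoc]
    · simp
  rw [hpf] at h1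
  rw [← Polynomial.aeval_def]
  have h2 : Polynomial.aeval u p * (α : Q) = 0 := by rw [← h1]; rfl
  exact hα.mul_left_eq_zero.1 h2

/-- The ring `closureAway T Q a` is a semilocal ring with a local uniformizer at each maximal
ideal, where moreover `a` has finite order, if `T ⧸ (a ^ n)` is Artinian for all `n` and `a` lies in every maximal ideal of it. -/
lemma closureAway_semilocal (ha : IsUnit (algebraMap T Q a))
    (hart : ∀ n : ℕ, IsArtinianRing (T ⧸ Ideal.span {a ^ n}))
    (hmax : ∀ N : Ideal (closureAway T Q a), N.IsMaximal → algebraMap T _ a ∈ N) :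
    Finite (MaximalSpectrum (closureAway T Q a)) ∧
      ∃ ν : MaximalSpectrum (closureAway T Q a) → closureAway T Q a,
        ∀ N : MaximalSpectrum (closureAway T Q a), IsLocUnif N.asIdeal (ν N) ∧
          algebraMap T _ a ∉ infOrder N.asIdeal (ν N) := by
  set S := closureAway T Q a with hS
  set α : S := algebraMap T S a with hα
  have hαQ : IsUnit (α : Q) := ha
  have hreg : ∀ s : S, α * s = 0 → s = 0 := by
    intro s hs
    have : (α : Q) * s = 0 := by rw [← Subalgebra.coe_mul, hs]; rfl
    exact Subtype.ext (hαQ.mul_right_eq_zero.1 this)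
  have hden : ∀ s : S, ∃ n : ℕ, ∃ t : T, algebraMap T S a ^ n * s = algebraMap T S t := by
    rintro ⟨s, hs⟩
    obtain ⟨-, n, t, h⟩ := hs
    exact ⟨n, t, Subtype.ext (by simpa using h)⟩
  have hartS : IsArtinianRing (S ⧸ Ideal.span {α}) :=
    isArtinianRing_quotient_overring a hreg hart hden
  have hic : ∀ (b : S) (J : Ideal S), J.FG → α ∈ J →
      (∀ z ∈ J, ∃ z' ∈ J, b * z = α * z') → α ∣ b := by
    intro b J hJ hαJ hb
    obtain ⟨v, hv⟩ := hαQ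
    have hint : IsIntegral S (↑v⁻¹ * (b : Q)) := by
      refine isIntegral_of_mul_mem ⟨v, hv⟩ hJ hαJ _ fun z hz => ?_
      obtain ⟨z', hz', h⟩ := hb z hz
      refine ⟨z', hz', ?_⟩
      have h' : (b : Q) * z = v * z' := by rw [hv, ← Subalgebra.coe_mul, h]; rfl
      rw [mul_assoc, h', Units.inv_mul_cancel_left]
    have hvb : (v : Q) * (↑v⁻¹ * (b : Q)) = b := Units.mul_inv_cancel_left _ _
    obtain ⟨n, t, ht⟩ := hden b
    have hmem : ↑v⁻¹ * (b : Q) ∈ S := by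
      refine mem_closureAway.2 ⟨isIntegral_trans _ hint, n + 1, t, ?_⟩
      have ht' : algebraMap T Q a ^ n * (b : Q) = algebraMap T Q t := by
        simpa using congrArg Subtype.val ht
      have hva : algebraMap T Q a = v := hv.symm
      rw [← ht', pow_succ, mul_assoc, hva, hvb]
    exact ⟨⟨_, hmem⟩, Subtype.ext (by rw [Subalgebra.coe_mul, ← hv, hvb])⟩
  have hprime : ∀ P : Ideal S, P.IsPrime → α ∈ P → P.IsMaximal ∧
      ((P.map (Ideal.Quotient.mk (Ideal.span {α}))).IsMaximal) ∧
      (P.map (Ideal.Quotient.mk (Ideal.span {α}))).comap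
        (Ideal.Quotient.mk (Ideal.span {α})) = P := by
    intro P hP hαP
    have hsurj : Function.Surjective (Ideal.Quotient.mk (Ideal.span {α})) :=
      Ideal.Quotient.mk_surjective
    have hle : Ideal.span {α} ≤ P := (Ideal.span_singleton_le_iff_mem _).2 hαP
    have hc : (P.map (Ideal.Quotient.mk (Ideal.span {α}))).comap
        (Ideal.Quotient.mk (Ideal.span {α})) = P := by
      rw [Ideal.comap_map_of_surjective' _ hsurj, Ideal.mk_ker, sup_eq_left]
      exact hle
    have h1 : (P.map (Ideal.Quotient.mk (Ideal.span {α}))).IsPrime :=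
      Ideal.map_isPrime_of_surjective hsurj (by rwa [Ideal.mk_ker])
    have h2 := IsArtinianRing.isMaximal_of_isPrime (P.map (Ideal.Quotient.mk (Ideal.span {α})))
    refine ⟨?_, h2, hc⟩
    rw [← hc]
    exact Ideal.comap_isMaximal_of_surjective _ hsurj
  refine ⟨?_, ?_⟩
  · refine Finite.of_injective (β := MaximalSpectrum (S ⧸ Ideal.span {α}))
      (fun N => ⟨_, (hprime N.asIdeal N.isMaximal.isPrime (hmax _ N.isMaximal)).2.1⟩) ?_
    intro N N' h
    have h' := congrArg MaximalSpectrum.asIdeal h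
    apply MaximalSpectrum.ext
    rw [← (hprime N.asIdeal N.isMaximal.isPrime (hmax _ N.isMaximal)).2.2,
      ← (hprime N'.asIdeal N'.isMaximal.isPrime (hmax _ N'.isMaximal)).2.2]
    exact congrArg _ h'
  · choose ν hν using fun N : MaximalSpectrum S =>
      exists_isLocUnif α hreg hic N.asIdeal (hN := N.isMaximal) (hmax _ N.isMaximal)
    exact ⟨ν, fun N => ⟨hν N, fun h => infOrder_not_isMaximal (hν N)
      (hprime _ (infOrder_isPrime (hν N)) h).1⟩⟩

end ClosureAway

/-! ### Descent to the local ring -/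

section LocalRing

open IsLocalRing

variable {R : Type*} [CommRing R] [IsLocalRing R]

lemma isArtinianRing_quotient_of_pow_le (hfg : (maximalIdeal R).FG) {I : Ideal R} {k : ℕ}
    (hI : maximalIdeal R ^ k ≤ I) : IsArtinianRing (R ⧸ I) := by
  have key : ∀ P : Ideal (R ⧸ I), P.IsPrime → P.comap (Ideal.Quotient.mk I) = maximalIdeal R := by
    intro P hP
    refine le_antisymm (le_maximalIdeal (Ideal.IsPrime.ne_top inferInstance)) ?_
    refine Ideal.IsPrime.le_of_pow_le (n := k) (hI.trans ?_)
    intro x hx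
    rw [Ideal.mem_comap, Ideal.Quotient.eq_zero_iff_mem.2 hx]
    exact P.zero_mem
  have hmap : ∀ P : Ideal (R ⧸ I), P.IsPrime →
      P = (maximalIdeal R).map (Ideal.Quotient.mk I) := fun P hP => by
    rw [← key P hP, Ideal.map_comap_of_surjective _ Ideal.Quotient.mk_surjective]
  rw [isArtinianRing_iff_isNoetherianRing_krullDimLE_zero]
  refine ⟨IsNoetherianRing.of_prime fun P hP => ?_, Ring.krullDimLE_zero_iff.2 fun P hP => ?_⟩
  · rw [hmap P hP]
    exact hfg.map _
  · obtain ⟨N, hN, hle⟩ := P.exists_le_maximal hP.ne_top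
    rwa [hmap P hP, ← hmap N hN.isPrime]

variable {S : Type*} [CommRing S] [Algebra R S] [Algebra.IsIntegral R S]

lemma comap_eq_maximalIdeal {N : Ideal S} (hN : N.IsMaximal) :
    N.comap (algebraMap R S) = maximalIdeal R :=
  eq_maximalIdeal (Ideal.isMaximal_comap_of_isIntegral_of_isMaximal N)

lemma jacobson_eq_radical_map :
    (⊥ : Ideal S).jacobson = ((maximalIdeal R).map (algebraMap R S)).radical := by
  rw [Ideal.jacobson, Ideal.radical_eq_sInf]
  congr 1
  ext P
  constructor
  · rintro ⟨-, hP⟩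
    exact ⟨Ideal.map_le_iff_le_comap.2 (comap_eq_maximalIdeal (R := R) hP).ge, hP.isPrime⟩
  · rintro ⟨hle, hP⟩
    refine ⟨bot_le, Ideal.isMaximal_of_isIntegral_of_isMaximal_comap (R := R) P ?_⟩
    have : P.comap (algebraMap R S) = maximalIdeal R :=
      le_antisymm (le_maximalIdeal (Ideal.IsPrime.ne_top inferInstance))
        (Ideal.map_le_iff_le_comap.1 hle)
    rw [this]
    infer_instance

/-- If `R` has a semilocal integral extension with local uniformizers, then prime avoidance
gives an element of the maximal ideal of `R` of finite order at every maximal ideal of `S`;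
such an element lies in no other prime of `R`, by lying over. -/
lemma exists_radical_eq (hinj : Function.Injective (algebraMap R S))
    [Finite (MaximalSpectrum S)] (ν : MaximalSpectrum S → S)
    (hν : ∀ N : MaximalSpectrum S, IsLocUnif N.asIdeal (ν N)) :
    ∃ a : R, maximalIdeal R = (Ideal.span {a}).radical := by
  classical
  have := Fintype.ofFinite (MaximalSpectrum S)
  let f : MaximalSpectrum S → Ideal R := fun N =>
    (infOrder N.asIdeal (ν N)).comap (algebraMap R S)
  have hf : ∀ N, (f N).IsPrime := fun N => by
    have := infOrder_isPrime (hν N)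
    exact Ideal.comap_isPrime _ _
  have hle : ∀ N, ¬ maximalIdeal R ≤ f N := by
    intro N h
    have hP := infOrder_isPrime (hν N)
    refine infOrder_not_isMaximal (hν N)
      (Ideal.isMaximal_of_isIntegral_of_isMaximal_comap (R := R) _ ?_)
    have h' : f N = maximalIdeal R := le_antisymm (le_maximalIdeal (hf N).ne_top) h
    change (f N).IsMaximal
    rw [h']
    infer_instance
  have hnot : ¬ ((maximalIdeal R : Set R) ⊆ ⋃ N ∈ (Finset.univ : Finset (MaximalSpectrum S)),
      (f N : Set R)) := by
    intro h
    obtain ⟨Q₀, hQ₀, -⟩ := Ideal.exists_ideal_over_maximal_of_isIntegral (S := S)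
      (maximalIdeal R) (by rw [(RingHom.injective_iff_ker_eq_bot _).1 hinj]; exact bot_le)
    obtain ⟨N, -, hN⟩ := (Ideal.subset_union_prime (s := Finset.univ) (f := f)
      (I := maximalIdeal R) (⟨Q₀, hQ₀⟩ : MaximalSpectrum S) ⟨Q₀, hQ₀⟩
      (fun N _ _ _ => hf N)).1 (by simpa using h)
    exact hle N hN
  obtain ⟨a, haM, ha⟩ := Set.not_subset.1 hnot
  have ha' : ∀ N, algebraMap R S a ∉ infOrder N.asIdeal (ν N) := by
    intro N h
    exact ha (Set.mem_iUnion₂.2 ⟨N, Finset.mem_univ _, h⟩)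
  refine ⟨a, le_antisymm ?_ ?_⟩
  · rw [Ideal.radical_eq_sInf]
    refine le_sInf ?_
    rintro q ⟨haq, hq⟩
    rw [Ideal.span_singleton_le_iff_mem] at haq
    obtain ⟨P, -, hP, hPq⟩ := Ideal.exists_ideal_over_prime_of_isIntegral (S := S) q ⊥ (by
      rw [← RingHom.ker_eq_comap_bot, (RingHom.injective_iff_ker_eq_bot _).1 hinj]
      exact bot_le)
    obtain ⟨N, hN, hPN⟩ := P.exists_le_maximal hP.ne_top
    have haP : algebraMap R S a ∈ P := by
      rw [← Ideal.mem_comap, hPq]; exact haq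
    -- locally at `N`, the element `a` is a unit times a power of `ν`, so `P` contains `ν`
    obtain ⟨n, w, b, -, hb, h⟩ := (notMem_infOrder_iff (hν ⟨N, hN⟩)).1 (ha' ⟨N, hN⟩)
    have hνP : ν ⟨N, hN⟩ ∈ P := by
      have : ν ⟨N, hN⟩ ^ n * b ∈ P := by rw [← h]; exact P.mul_mem_left _ haP
      exact hP.mem_of_pow_mem _ ((hP.mem_or_mem this).resolve_right fun h => hb (hPN h))
    obtain ⟨-, w0, hw0, hdvd, -⟩ := hν ⟨N, hN⟩
    have hNP : N ≤ P := by
      intro z hz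
      obtain ⟨c, hc⟩ := hdvd z hz
      have : w0 * z ∈ P := by rw [hc]; exact P.mul_mem_right _ hνP
      exact (hP.mem_or_mem this).resolve_left fun h => hw0 (hPN h)
    rw [← hPq, le_antisymm hPN hNP, comap_eq_maximalIdeal hN]
  · rw [Ideal.IsPrime.radical_le_iff inferInstance, Ideal.span_singleton_le_iff_mem]
    exact haM

end LocalRing

/-! ### The equivalence -/

section Main

open IsLocalRing

variable {R : Type*} [CommRing R] [IsLocalRing R]

lemma pow_le_span_pow {T : Type*} [CommRing T] {J : Ideal T} {x : T} {k : ℕ}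
    (h : J ^ k ≤ Ideal.span {x}) (n : ℕ) : J ^ (k * n) ≤ Ideal.span {x ^ n} := by
  rw [pow_mul, ← Ideal.span_singleton_pow]
  exact Ideal.pow_right_mono h n

/-- Maximal ideals of `S` are contracted from maximal ideals of the integral extension `B`, by lying
over. -/
lemma mem_of_mem_jacobson {S B : Type*} [CommRing S] [CommRing B] (φ : S →+* B)
    (hinj : Function.Injective φ) (hint : φ.IsIntegral) {s : S}
    (hs : φ s ∈ (⊥ : Ideal B).jacobson) {N : Ideal S} (hN : N.IsMaximal) : s ∈ N := by
  algebraize [φ]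
  have hker : RingHom.ker (algebraMap S B) ≤ N := by
    rw [(RingHom.injective_iff_ker_eq_bot (algebraMap S B)).1 hinj]
    exact bot_le
  obtain ⟨P, hP, hPN⟩ := Ideal.exists_ideal_over_maximal_of_isIntegral (S := B) N hker
  rw [← hPN, Ideal.mem_comap]
  exact (Ideal.mem_sInf.1 hs) ⟨bot_le, hP⟩

/-- Every ideal containing a power of the maximal ideal becomes principal already in the integral
closure of `R` in `R[1/a]`, which is semilocal with local uniformizers. -/
lemma map_isPrincipal (hfg : (maximalIdeal R).FG) (hreg : ∃ r ∈ maximalIdeal R, r ∈ R⁰)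
    {a : R} (ha : maximalIdeal R = (Ideal.span {a}).radical) (I : Ideal R)
    (hI : I.radical = maximalIdeal R) :
    (I.map (algebraMap R (integralClosure R (Localization R⁰)))).IsPrincipal := by
  have haM : a ∈ maximalIdeal R := by
    rw [ha]; exact Ideal.le_radical (Ideal.mem_span_singleton_self a)
  obtain ⟨k, hk⟩ := Ideal.exists_pow_le_of_le_radical_of_fg ha.le hfg
  have haR : a ∈ R⁰ := by
    obtain ⟨r, hrM, hr⟩ := hreg
    obtain ⟨c, hc⟩ := Ideal.mem_span_singleton.1 (hk (Ideal.pow_mem_pow hrM k))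
    have h1 : a * c ∈ R⁰ := hc ▸ pow_mem hr k
    exact (mul_mem_nonZeroDivisors.1 h1).1
  have hu : IsUnit (algebraMap R (Localization R⁰) a) :=
    IsLocalization.map_units (Localization R⁰) (⟨a, haR⟩ : R⁰)
  let S := closureAway R (Localization R⁰) a
  have hmax : ∀ N : Ideal S, N.IsMaximal → algebraMap R S a ∈ N := by
    intro N hN
    rw [← Ideal.mem_comap, comap_eq_maximalIdeal hN]
    exact haM
  obtain ⟨hfin, ν, hν⟩ := closureAway_semilocal hu
    (fun n => isArtinianRing_quotient_of_pow_le hfg (pow_le_span_pow hk n)) hmax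
  have hprin : (I.map (algebraMap R S)).IsPrincipal := by
    refine isPrincipal_of_locUnif ν (fun N => (hν N).1) _ fun N hle => ?_
    obtain ⟨m, hm⟩ : a ∈ I.radical := by rw [hI]; exact haM
    have := infOrder_isPrime (hν N).1
    refine (hν N).2 (this.mem_of_pow_mem m ?_)
    rw [← map_pow]
    exact hle (Ideal.mem_map_of_mem _ hm)
  let φ : S →ₐ[R] integralClosure R (Localization R⁰) :=
    Subalgebra.inclusion fun z hz => (mem_closureAway.1 hz).1
  obtain ⟨⟨y, hy⟩⟩ := hprin
  have hφ : algebraMap R (integralClosure R (Localization R⁰)) =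
      (φ : S →+* integralClosure R (Localization R⁰)).comp (algebraMap R S) :=
    φ.comp_algebraMap.symm
  refine ⟨⟨φ y, ?_⟩⟩
  rw [hφ, ← Ideal.map_map, hy]
  exact (Ideal.map_span _ _).trans (by rw [Set.image_singleton]; rfl)

/-- Finitely many elements of the integral closure suffice to express that a power of the maximal
ideal of `R` lies in `(x)`.  They generate a finite extension `T` of `R` in which `T ⧸ (x ^ n)` is
Artinian, and the integral closure of `T` in `T[1/x]` descends to an element of `R`. -/
lemma exists_radical_eq_of_jacobson (hfg : (maximalIdeal R).FG)
    (hreg : ∃ r ∈ maximalIdeal R, r ∈ R⁰) (x : integralClosure R (Localization R⁰))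
    (hx : (⊥ : Ideal (integralClosure R (Localization R⁰))).jacobson =
      (Ideal.span {x}).radical) :
    ∃ a : R, maximalIdeal R = (Ideal.span {a}).radical := by
  classical
  have hinjQ : Function.Injective (algebraMap R (Localization R⁰)) :=
    IsLocalization.injective _ le_rfl
  have hle : (maximalIdeal R) ≤ ((Ideal.span {x}).comap (algebraMap R _)).radical := by
    rw [← Ideal.comap_radical, ← hx, jacobson_eq_radical_map (R := R), ← Ideal.map_le_iff_le_comap]
    exact Ideal.le_radical
  obtain ⟨k, hk⟩ := Ideal.exists_pow_le_of_le_radical_of_fg hle hfg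
  obtain ⟨G, hG⟩ : (maximalIdeal R ^ k).FG := Submodule.FG.pow hfg k
  have hy : ∀ m : R, ∃ y : integralClosure R (Localization R⁰), m ∈ G →
      algebraMap R _ m = x * y := by
    intro m
    by_cases hm : m ∈ G
    · have h1 : m ∈ maximalIdeal R ^ k := hG ▸ Submodule.subset_span hm
      obtain ⟨y, hy⟩ := Ideal.mem_span_singleton.1 (hk h1)
      exact ⟨y, fun _ => hy⟩
    · exact ⟨0, fun h => absurd h hm⟩
  choose y hy using hy
  let A : Set (Localization R⁰) :=
    insert (x : Localization R⁰) ((fun m => (y m : Localization R⁰)) '' (G : Set R))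
  have hAint : ∀ z ∈ A, IsIntegral R z := by
    rintro z (rfl | ⟨m, -, rfl⟩)
    · exact x.2
    · exact (y m).2
  have hAfin : A.Finite := (G.finite_toSet.image _).insert _
  let T := Algebra.adjoin R A
  have hTfin : Module.Finite R T := Module.Finite.iff_fg.2 (fg_adjoin_of_finite hAfin hAint)
  let t : T := ⟨x, Algebra.subset_adjoin (Set.mem_insert _ _)⟩
  have hkT : maximalIdeal R ^ k ≤ (Ideal.span {t}).comap (algebraMap R T) := by
    rw [← hG]
    refine Submodule.span_le.2 fun m hm => ?_
    rw [SetLike.mem_coe, Ideal.mem_comap, Ideal.mem_span_singleton]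
    refine ⟨⟨y m, Algebra.subset_adjoin (Set.mem_insert_of_mem _ ⟨m, hm, rfl⟩)⟩, ?_⟩
    apply Subtype.ext
    have h := congrArg (fun w : integralClosure R (Localization R⁰) => (w : Localization R⁰)) (hy m hm)
    exact h
  have hart : ∀ n : ℕ, IsArtinianRing (T ⧸ Ideal.span {t ^ n}) := by
    intro n
    have hn : maximalIdeal R ^ (k * n) ≤ (Ideal.span {t ^ n}).comap (algebraMap R T) := by
      rw [← Ideal.map_le_iff_le_comap, Ideal.map_pow]
      refine pow_le_span_pow ?_ n
      rw [← Ideal.map_pow]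
      exact Ideal.map_le_iff_le_comap.2 hkT
    have := isArtinianRing_quotient_of_pow_le hfg (le_refl (maximalIdeal R ^ (k * n)))
    let _ : Algebra (R ⧸ maximalIdeal R ^ (k * n)) (T ⧸ Ideal.span {t ^ n}) :=
      Ideal.Quotient.algebraQuotientOfLEComap hn
    have : IsScalarTower R (R ⧸ maximalIdeal R ^ (k * n)) (T ⧸ Ideal.span {t ^ n}) :=
      IsScalarTower.of_algebraMap_eq' rfl
    have : Module.Finite (R ⧸ maximalIdeal R ^ (k * n)) (T ⧸ Ideal.span {t ^ n}) :=
      Module.Finite.of_restrictScalars_finite R _ _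
    exact IsArtinianRing.of_finite (R ⧸ maximalIdeal R ^ (k * n)) _
  have hunit : IsUnit (algebraMap T (Localization R⁰) t) := by
    obtain ⟨r, hrM, hr⟩ := hreg
    obtain ⟨c, hc⟩ := Ideal.mem_span_singleton.1 (hkT (Ideal.pow_mem_pow hrM k))
    have h1 : IsUnit (algebraMap R (Localization R⁰) (r ^ k)) :=
      IsLocalization.map_units (Localization R⁰) (⟨r ^ k, pow_mem hr k⟩ : R⁰)
    have h2 : algebraMap R (Localization R⁰) (r ^ k) =
        algebraMap T (Localization R⁰) t * algebraMap T (Localization R⁰) c := by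
      rw [← map_mul, ← hc]; rfl
    rw [h2] at h1
    exact isUnit_of_mul_isUnit_left h1
  let S := closureAway T (Localization R⁰) t
  have hTint : Algebra.IsIntegral R T := Algebra.IsIntegral.of_finite R T
  have hSint : Algebra.IsIntegral R S := Algebra.IsIntegral.trans T
  let φ : S →+* integralClosure R (Localization R⁰) :=
    { toFun := fun z => ⟨z, isIntegral_trans (A := T) _ (mem_closureAway.1 z.2).1⟩
      map_one' := rfl
      map_zero' := rfl
      map_mul' := fun _ _ => rfl
      map_add' := fun _ _ => rfl }
  have hφinj : Function.Injective φ := fun z z' h =>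
    Subtype.ext (congrArg (fun w : integralClosure R (Localization R⁰) => (w : Localization R⁰)) h)
  have hφint : RingHom.IsIntegral (R := S) (A := integralClosure R (Localization R⁰)) φ := by
    refine RingHom.IsIntegral.tower_top (R := R) (S := S)
      (T := integralClosure R (Localization R⁰)) (algebraMap R S) φ ?_
    intro z
    exact Algebra.IsIntegral.isIntegral (R := R) z
  have hmax : ∀ N : Ideal S, N.IsMaximal → algebraMap T S t ∈ N := by
    intro N hN
    refine mem_of_mem_jacobson (S := S) φ hφinj hφint ?_ hN
    have h1 : φ (algebraMap T S t) = x := rfl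
    rw [h1, hx]
    exact Ideal.le_radical (Ideal.mem_span_singleton_self x)
  obtain ⟨hfin, ν, hν⟩ := closureAway_semilocal hunit hart hmax
  refine exists_radical_eq (S := S) (fun r r' h => hinjQ ?_) ν fun N => (hν N).1
  exact congrArg Subtype.val h

end Main

/-- Let `R` be a local ring with finitely generated regular maximal ideal `M`, and let `R̄`
be the integral closure of `R` in its total quotient ring `Q(R)`.  The following are
equivalent: (1) `M` is the radical of a principal ideal of `R`; (2) every `M`-primary ideal
of `R` extends to a principal ideal of `R̄`; (3) `Jac R̄` is the radical of a principal
ideal of `R̄`. -/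
theorem pre_stable_integral_closure {R : Type*} [CommRing R] [IsLocalRing R]
    (hfg : (IsLocalRing.maximalIdeal R).FG)
    (hreg : ∃ r ∈ IsLocalRing.maximalIdeal R, r ∈ R⁰) :
    List.TFAE
      [∃ a : R, IsLocalRing.maximalIdeal R = (Ideal.span {a}).radical,
       ∀ I : Ideal R, I.IsPrimary → I.radical = IsLocalRing.maximalIdeal R →
         (I.map (algebraMap R (integralClosure R (Localization R⁰)))).IsPrincipal,
       ∃ x : integralClosure R (Localization R⁰),
         (⊥ : Ideal (integralClosure R (Localization R⁰))).jacobson =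
           (Ideal.span {x}).radical] := by
  tfae_have 1 → 2 := by
    rintro ⟨a, ha⟩ I - hI
    exact map_isPrincipal hfg hreg ha I hI
  tfae_have 2 → 3 := by
    intro h
    have hM : (IsLocalRing.maximalIdeal R).IsPrime := inferInstance
    obtain ⟨⟨x, hx⟩⟩ := h _ hM.isPrimary hM.radical
    exact ⟨x, by rw [jacobson_eq_radical_map (R := R), hx]⟩
  tfae_have 3 → 1 := by
    rintro ⟨x, hx⟩
    exact exists_radical_eq_of_jacobson hfg hreg x hx
  tfae_finish
end

section
/- Let R be a local ring with finitely generated regular maximal ideal M such that R is integrally closed in its total quotient ring Q(R). Then M is the radical of a principal ideal if and only if M is a principal ideal. -/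
open scoped nonZeroDivisors

/-!
The nontrivial direction: let `M` be the radical of `(a)`. Since `M` is finitely generated,
`M ^ n ≤ (a)` for some `n`, so `a` is regular because `M` is. Take `n` minimal; as `a` is not a
unit, `n = k + 1`, and there is `b ∈ M ^ k` with `b ∉ (a)`, whereas `b M ⊆ (a)`. Put
`x = b / a` in `Q(R)`, so `x M ⊆ R` and `x ∉ R`.
If `x M ⊆ M`, then Cayley-Hamilton on the finitely generated module `M`, which is faithful over
`R[x]` since it contains a nonzerodivisor, makes `x` integral over `R`, hence `x ∈ R`, a
contradiction (`mem_span_of_mul_le`). Otherwise `x m` is a unit of `R` for some `m ∈ M`,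
and then `M = (m)`.
-/

/-- Denominator-free form of the determinant trick: if `b I ⊆ a I` for a finitely generated
regular ideal `I`, then `b / a` is integral over `R`, so `a ∣ b` when `R` is integrally closed. -/
theorem mem_span_of_mul_le {R : Type*} [CommRing R] (hic : IsIntegrallyClosed R)
    {I : Ideal R} (hI : I.FG) {r : R} (hrI : r ∈ I) (hr : r ∈ R⁰) {a b : R} (ha : a ∈ R⁰)
    (h : ∀ y ∈ I, ∃ c ∈ I, b * y = a * c) : b ∈ Ideal.span {a} := by
  let Q := FractionRing R
  let x : Q := IsLocalization.mk' Q b ⟨a, ha⟩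
  have hax : algebraMap R Q a * x = algebraMap R Q b := IsLocalization.mk'_spec' Q b ⟨a, ha⟩
  have haU : IsUnit (algebraMap R Q a) := IsLocalization.map_units Q ⟨a, ha⟩
  have hrU : IsUnit (algebraMap R Q r) := IsLocalization.map_units Q ⟨r, hr⟩
  let N : Submodule R Q := Submodule.map (Algebra.linearMap R Q) I
  have hN : N.FG := Submodule.FG.map _ hI
  have hxN : ∀ n ∈ N, LinearMap.mulLeft R x n ∈ N := by
    rintro _ ⟨y, hy, rfl⟩
    obtain ⟨c, hc, hbc⟩ := h y hy
    refine ⟨c, hc, haU.mul_left_cancel ?_⟩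
    simp only [Algebra.linearMap_apply, LinearMap.mulLeft_apply]
    rw [← mul_assoc, hax, ← map_mul, ← map_mul, hbc]
  have : Module.Finite R N := Module.Finite.iff_fg.mpr hN
  have hx : IsIntegral R x := by
    let f : Module.End R N := (LinearMap.mulLeft R x).restrict hxN
    have hf : ∀ n : N, ((f n : N) : Q) = x * n := fun _ => rfl
    obtain ⟨p, hp, hp0⟩ := (inferInstance : Algebra.IsIntegral R (Module.End R N)).isIntegral f
    refine ⟨p, hp, ?_⟩
    change Polynomial.aeval _ p = 0 at hp0
    change Polynomial.aeval x p = 0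
    -- evaluating `q` at `f`, multiplication by `x` on `N`, is multiplication by `q(x)`
    have key : ∀ (q : Polynomial R) (n : N),
        ((Polynomial.aeval f q n : N) : Q) = Polynomial.aeval x q * n := by
      intro q
      induction q using Polynomial.induction_on' with
      | add p q hp hq => intro n; simp [hp, hq, add_mul]
      | monomial k c =>
        induction k generalizing c with
        | zero => intro n; simp [Algebra.smul_def]
        | succ k ih =>
          intro n
          have := ih c (f n)
          simp only [Polynomial.aeval_monomial, pow_succ, ← mul_assoc] at this ⊢
          rw [Module.End.mul_apply, this, hf]
          ring
    have h0 := key p ⟨algebraMap R Q r, r, hrI, rfl⟩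
    rw [hp0] at h0
    exact hrU.mul_left_eq_zero.mp h0.symm
  obtain ⟨c, hc⟩ := IsIntegrallyClosed.algebraMap_eq_of_integral hx
  refine Ideal.mem_span_singleton'.mpr ⟨c, IsFractionRing.injective R Q ?_⟩
  rw [map_mul, hc, mul_comm, hax]

/-- Let `R` be a local ring with finitely generated regular maximal ideal `M` such that `R`
is integrally closed in its total quotient ring `Q(R)`.  Then `M` is the radical of a
principal ideal iff `M` is a principal ideal. -/
theorem int_closed_radical_principal {R : Type*} [CommRing R] [IsLocalRing R]
    (hfg : (IsLocalRing.maximalIdeal R).FG)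
    (hreg : ∃ r ∈ IsLocalRing.maximalIdeal R, r ∈ R⁰)
    (hic : IsIntegrallyClosed R) :
    (∃ a : R, IsLocalRing.maximalIdeal R = (Ideal.span {a}).radical) ↔
      (IsLocalRing.maximalIdeal R).IsPrincipal := by
  classical
  constructor
  · rintro ⟨a, hM⟩
    obtain ⟨r, hrM, hr⟩ := hreg
    have hex : ∃ n, IsLocalRing.maximalIdeal R ^ n ≤ Ideal.span {a} := by
      rw [hM]
      exact Ideal.exists_radical_pow_le_of_fg _ (hM ▸ hfg)
    have ha : a ∈ R⁰ := by
      obtain ⟨n, hn⟩ := hex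
      obtain ⟨c, hc⟩ := Ideal.mem_span_singleton'.mp (hn (Ideal.pow_mem_pow hrM n))
      exact (mul_mem_nonZeroDivisors.mp (hc ▸ pow_mem hr n)).2
    have haM : a ∈ IsLocalRing.maximalIdeal R :=
      hM ▸ Ideal.le_radical (Ideal.mem_span_singleton_self a)
    obtain ⟨k, hk⟩ : ∃ k, Nat.find hex = k + 1 := by
      refine Nat.exists_eq_succ_of_ne_zero fun h0 => ?_
      have h1 := Nat.find_spec hex
      rw [h0, pow_zero, Ideal.one_eq_top, top_le_iff, Ideal.span_singleton_eq_top] at h1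
      exact haM h1
    have hk1 : IsLocalRing.maximalIdeal R ^ (k + 1) ≤ Ideal.span {a} := hk ▸ Nat.find_spec hex
    obtain ⟨b, hbk, hba⟩ := SetLike.not_le_iff_exists.mp (Nat.find_min hex (m := k) (by lia))
    have hdiv : ∀ y ∈ IsLocalRing.maximalIdeal R, ∃ c, b * y = a * c := fun y hy =>
      Ideal.mem_span_singleton.mp (hk1 (pow_succ (IsLocalRing.maximalIdeal R) k ▸
        Ideal.mul_mem_mul hbk hy))
    by_cases hc : ∀ y ∈ IsLocalRing.maximalIdeal R,
        ∃ c ∈ IsLocalRing.maximalIdeal R, b * y = a * c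
    · exact absurd (mem_span_of_mul_le hic hfg hrM hr ha hc) hba
    · push Not at hc
      obtain ⟨m, hm, hmc⟩ := hc
      obtain ⟨c, hbm⟩ := hdiv m hm
      have hcU : IsUnit c := by
        by_contra hcn
        exact hmc c ((IsLocalRing.mem_maximalIdeal c).mpr hcn) hbm
      obtain ⟨u, rfl⟩ := hcU
      have hb : b ∈ R⁰ :=
        (mul_mem_nonZeroDivisors.mp
          (hbm ▸ mul_mem ha u.isUnit.mem_nonZeroDivisors : b * m ∈ R⁰)).1
      refine ⟨m, le_antisymm (fun y hy => ?_) ?_⟩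
      · obtain ⟨d, hd⟩ := hdiv y hy
        refine Ideal.mem_span_singleton'.mpr ⟨↑u⁻¹ * d, ?_⟩
        refine (mul_cancel_left_mem_nonZeroDivisors hb).mp ?_
        calc b * (↑u⁻¹ * d * m) = b * m * (↑u⁻¹ * d) := by ring
          _ = a * (u * ↑u⁻¹) * d := by rw [hbm]; ring
          _ = b * y := by rw [Units.mul_inv, mul_one, hd]
      · exact (Ideal.span_singleton_le_iff_mem _).mpr hm
  · rintro ⟨m, hm⟩
    refine ⟨m, ?_⟩
    change _ = Ideal.span {m} at hm
    rw [← hm]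
    exact (IsLocalRing.maximalIdeal.isMaximal R).isPrime.radical.symm
end

section
/- Let R be a generalized local ring whose maximal ideal is regular and is the radical of a principal ideal. Then each minimal prime ideal of R and each one-dimensional prime ideal of R is contracted from a minimal prime ideal of the completion R̂ (via the canonical embedding R → R̂). -/
/-!
Write `M` for the maximal ideal of `R`, with `M` the radical of `(a)`, and `R̂` for the completion.

A minimal prime of `R` lifts to a minimal prime of `R̂` because `R → R̂` is injective.

Let `P` be a one-dimensional prime. The primes of `R ⧸ P` are `0` and its finitely generated
maximal ideal, so `R ⧸ P` is Noetherian by Cohen's theorem, hence separated by Krull's intersection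
theorem. Therefore `P` is closed in the `M`-adic topology, `P R̂ ∩ R = P`
(`comap_map_adicCompletion_eq`), and some prime `Q` of `R̂` lies over `P`. Since `P ≠ M`, the element
`a` is not in `Q`, and it remains to see that such a `Q` is minimal. The ring `R̂` is local and
complete, and its maximal ideal is finitely generated and equal to the radical of `a R̂`. These
properties make it Noetherian (`isNoetherianRing_of_isAdicComplete`): by Cohen's theorem it suffices
that primes be finitely generated, and those not containing `a` are so by lifting generators
modulo `a` (`fg_of_notMem_of_isAdicComplete`). Krull's principal ideal theorem then bounds the
height of its maximal ideal by `1`, so every prime not containing `a` is minimal.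
-/

open scoped nonZeroDivisors
open IsLocalRing

theorem isPrecomplete_pi_self {S ι : Type*} [CommRing S] [Finite ι] (I : Ideal S)
    [IsPrecomplete I S] : IsPrecomplete I (ι → S) := by
  classical
  cases nonempty_fintype ι
  refine ⟨fun f hf ↦ ?_⟩
  have key : ∀ (i : ι) {m n : ℕ}, m ≤ n → f m i ≡ f n i [SMOD (I ^ m • ⊤ : Submodule S S)] := by
    intro i m n hmn
    rw [SModEq.sub_mem]
    have := Submodule.mem_map_of_mem (f := LinearMap.proj (R := S) (φ := fun _ : ι ↦ S) i)
      (SModEq.sub_mem.mp (hf hmn))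
    rw [Submodule.map_smul''] at this
    exact Submodule.smul_mono le_rfl le_top this
  choose L hL using fun i ↦ IsPrecomplete.prec (I := I) (M := S) inferInstance
    (f := fun n ↦ f n i) (key i)
  refine ⟨L, fun n ↦ ?_⟩
  rw [SModEq.sub_mem, pi_eq_sum_univ' (f n - L)]
  refine Submodule.sum_mem _ fun i _ ↦ Submodule.smul_mem_smul ?_ trivial
  simpa [SModEq.sub_mem] using hL i n

/-- A prime ideal `Q` with `a ∉ Q` satisfies `Q ∩ (a) = aQ`, so generators of the image of `Q` in
the Noetherian ring `S ⧸ (a)` lift to generators of `Q` by successive approximation. -/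
theorem fg_of_notMem_of_isAdicComplete {S : Type*} [CommRing S] (I : Ideal S)
    [IsAdicComplete I S] {a : S} (ha : a ∈ I) [IsNoetherianRing (S ⧸ Ideal.span {a})]
    (Q : Ideal S) [Q.IsPrime] (haQ : a ∉ Q) : Q.FG := by
  classical
  -- `S ⧸ (a)` has the same submodules over `S` as over itself.
  have hN : IsNoetherian S (S ⧸ Ideal.span {a}) :=
    have : RingHomSurjective (Ideal.Quotient.mk (Ideal.span {a})) :=
      ⟨Ideal.Quotient.mk_surjective⟩
    let e : (S ⧸ Ideal.span {a}) →ₛₗ[Ideal.Quotient.mk (Ideal.span {a})] (S ⧸ Ideal.span {a}) :=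
      { toFun := id
        map_add' := fun _ _ ↦ rfl
        map_smul' := fun r x ↦ Algebra.smul_def r x }
    (LinearMap.isNoetherian_iff_of_bijective e Function.bijective_id).mpr ‹_›
  obtain ⟨t, ht⟩ := hN.noetherian (Submodule.map (Submodule.mkQ (Ideal.span {a})) Q)
  obtain ⟨u, huQ, rfl⟩ := Finset.subset_set_image_iff.mp
    (show (t : Set (S ⧸ Ideal.span {a})) ⊆ Submodule.mkQ (Ideal.span {a}) '' Q by
      rw [← Submodule.map_coe, ← ht]; exact Submodule.subset_span)
  rw [Finset.coe_image, ← Submodule.map_span] at ht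
  -- `Q = (u) + aQ`, because `a * y ∈ Q` forces `y ∈ Q`.
  have hdec : ∀ x ∈ Q, ∃ j ∈ Submodule.span S (u : Set S), ∃ y ∈ Q, x = j + a * y := by
    intro x hx
    obtain ⟨j, hj, hjx⟩ := ht.ge (Submodule.mem_map_of_mem hx)
    have h1 : x - j ∈ Ideal.span {a} := by
      rw [← Submodule.Quotient.eq]; exact hjx.symm
    obtain ⟨y, hy⟩ := Ideal.mem_span_singleton'.mp h1
    have hjQ : j ∈ Q := Submodule.span_le.mpr huQ hj
    have : y * a ∈ Q := hy ▸ Q.sub_mem hx hjQ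
    exact ⟨j, hj, y, (Ideal.IsPrime.mem_or_mem ‹_› this).resolve_right haQ, by
      rw [mul_comm, hy]; ring⟩
  let g : u → Q := fun i ↦ ⟨i, huQ i.2⟩
  let f : (u → S) →ₗ[S] Q := Fintype.linearCombination S g
  have : IsPrecomplete I (u → S) := isPrecomplete_pi_self I
  have : IsHausdorff I Q := ⟨fun x hx ↦ by
    refine Subtype.ext (IsHausdorff.haus (I := I) (M := S) inferInstance _ fun n ↦ ?_)
    have := Submodule.mem_map_of_mem (f := Submodule.subtype Q) (SModEq.sub_mem.mp (hx n))
    rw [Submodule.map_smul''] at this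
    exact SModEq.sub_mem.mpr (Submodule.smul_mono le_rfl le_top (by simpa using this))⟩
  -- Surjectivity of `f` modulo `I` suffices: its source is complete and its target separated.
  have hf : Function.Surjective f := by
    refine surjective_of_mkQ_comp_surjective (I := I) fun z ↦ ?_
    obtain ⟨x, rfl⟩ := Submodule.mkQ_surjective _ z
    obtain ⟨j, hj, y, hy, hx⟩ := hdec x x.2
    obtain ⟨c, hc⟩ := (Submodule.mem_span_finset').mp hj
    refine ⟨c, ?_⟩
    rw [LinearMap.comp_apply, Submodule.mkQ_apply, Submodule.mkQ_apply, Submodule.Quotient.eq,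
      ← neg_mem_iff]
    have : -(f c - x) = a • (⟨y, hy⟩ : Q) := by
      apply Subtype.ext
      simp [f, g, Fintype.linearCombination_apply, hx, ← hc]
    rw [this]
    exact Submodule.smul_mem_smul ha trivial
  have : Module.Finite S Q := Module.Finite.of_surjective f hf
  exact Module.Finite.iff_fg.mp this

theorem isMaximal_of_mem_of_eq_radical {S : Type*} [CommRing S] [IsLocalRing S] {a : S}
    (hrad : maximalIdeal S = (Ideal.span {a}).radical) {Q : Ideal S} (hQ : Q.IsPrime)
    (haQ : a ∈ Q) : Q = maximalIdeal S :=
  le_antisymm (le_maximalIdeal hQ.ne_top)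
    (hrad ▸ hQ.radical_le_iff.mpr ((Ideal.span_singleton_le_iff_mem Q).mpr haQ))

/-- A complete local ring whose maximal ideal is finitely generated and the radical of a principal
ideal is Noetherian. Cohen's theorem is used twice: modulo `a`, where the maximal ideal is the
only prime, and then for the ring itself. -/
theorem isNoetherianRing_of_isAdicComplete {S : Type*} [CommRing S] [IsLocalRing S]
    [IsAdicComplete (maximalIdeal S) S] (hfg : (maximalIdeal S).FG) {a : S}
    (hrad : maximalIdeal S = (Ideal.span {a}).radical) : IsNoetherianRing S := by
  have ha : a ∈ maximalIdeal S := hrad ▸ Ideal.le_radical (Ideal.mem_span_singleton_self a)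
  have : IsNoetherianRing (S ⧸ Ideal.span {a}) := .of_prime fun p hp ↦ by
    have h1 : p.comap (Ideal.Quotient.mk (Ideal.span {a})) = maximalIdeal S :=
      isMaximal_of_mem_of_eq_radical hrad (hp.comap _) (by simp [Ideal.mem_comap])
    rw [← Ideal.map_comap_of_surjective _ Ideal.Quotient.mk_surjective p, h1]
    exact hfg.map _
  refine .of_prime fun Q hQ ↦ ?_
  by_cases haQ : a ∈ Q
  · rwa [isMaximal_of_mem_of_eq_radical hrad hQ haQ]
  · exact fg_of_notMem_of_isAdicComplete _ ha Q haQ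

/-- By Krull's principal ideal theorem the maximal ideal has height at most one, so a prime strictly
below it is minimal. -/
theorem mem_minimalPrimes_of_notMem {S : Type*} [CommRing S] [IsLocalRing S]
    [IsNoetherianRing S] {a : S} (hrad : maximalIdeal S = (Ideal.span {a}).radical)
    {Q : Ideal S} (hQ : Q.IsPrime) (haQ : a ∉ Q) : Q ∈ minimalPrimes S := by
  have ha : a ∈ maximalIdeal S := hrad ▸ Ideal.le_radical (Ideal.mem_span_singleton_self a)
  have hmin : maximalIdeal S ∈ (Ideal.span {a}).minimalPrimes :=
    ⟨⟨inferInstance, (Ideal.span_singleton_le_iff_mem _).mpr ha⟩, fun q hq _ ↦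
      (isMaximal_of_mem_of_eq_radical hrad hq.1
        ((Ideal.span_singleton_le_iff_mem q).mp hq.2)).ge⟩
  have hlt : Q < maximalIdeal S :=
    lt_of_le_of_ne (le_maximalIdeal hQ.ne_top) fun h ↦ haQ (h ▸ ha)
  have := Ideal.height_le_iff.mp
    (Ideal.height_le_one_of_isPrincipal_of_mem_minimalPrimes _ _ hmin) Q hQ hlt
  rw [← Ideal.height_eq_zero_iff]
  exact Order.lt_one_iff.mp (by exact_mod_cast this)

/-- An ideal `P` that is closed in the `I`-adic topology, i.e. such that `R ⧸ P` is separated, is the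
contraction of its extension to the completion: an element of `P R̂ ∩ R` lies in `P + I ^ n` for
every `n`, as is seen by mapping to `R ⧸ I ^ n`. -/
theorem comap_map_adicCompletion_eq {R : Type*} [CommRing R] (I P : Ideal R)
    [IsHausdorff (I.map (Ideal.Quotient.mk P)) (R ⧸ P)] :
    (P.map (algebraMap R (AdicCompletion I R))).comap (algebraMap R (AdicCompletion I R)) = P := by
  refine le_antisymm (fun x hx ↦ ?_) Ideal.le_comap_map
  rw [← Ideal.Quotient.eq_zero_iff_mem]
  refine IsHausdorff.haus (I := I.map (Ideal.Quotient.mk P)) inferInstance _ fun n ↦ ?_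
  have h1 := Ideal.mem_map_of_mem (AdicCompletion.evalₐ I n).toRingHom (Ideal.mem_comap.mp hx)
  rw [Ideal.map_map] at h1
  have h2 : (AdicCompletion.evalₐ I n).toRingHom.comp (algebraMap R (AdicCompletion I R))
      = Ideal.Quotient.mk (I ^ n) := (AdicCompletion.evalₐ I n).comp_algebraMap
  have h3 : (AdicCompletion.evalₐ I n).toRingHom (algebraMap R (AdicCompletion I R) x)
      = Ideal.Quotient.mk (I ^ n) x := congr($h2 x)
  rw [h2, h3, ← Ideal.mem_comap,
    Ideal.comap_map_of_surjective _ Ideal.Quotient.mk_surjective, ← RingHom.ker_eq_comap_bot,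
    Ideal.mk_ker] at h1
  have h4 := Ideal.mem_map_of_mem (Ideal.Quotient.mk P) h1
  rw [Ideal.map_sup, Ideal.map_quotient_self, bot_sup_eq, Ideal.map_pow] at h4
  rw [SModEq.sub_mem]
  simpa using h4

theorem isNoetherianRing_quotient_of_ringKrullDim_eq_one {R : Type*} [CommRing R] [IsLocalRing R]
    (hfg : (maximalIdeal R).FG) (P : Ideal R) [P.IsPrime] (hdim : ringKrullDim (R ⧸ P) = 1) :
    IsNoetherianRing (R ⧸ P) := by
  have : Ring.KrullDimLE 1 (R ⧸ P) := Ring.krullDimLE_iff.mpr hdim.le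
  refine .of_prime_ne_bot fun p hp hp0 ↦ ?_
  have hpm := hp.isMaximal_of_ne_bot hp0
  have h1 : p.comap (Ideal.Quotient.mk P) = maximalIdeal R :=
    eq_maximalIdeal (Ideal.comap_isMaximal_of_surjective _ Ideal.Quotient.mk_surjective)
  rw [← Ideal.map_comap_of_surjective _ Ideal.Quotient.mk_surjective p, h1]
  exact hfg.map _

theorem maximalIdeal_adicCompletion_eq_radical {R : Type*} [CommRing R] [IsLocalRing R]
    [IsLocalRing (AdicCompletion (maximalIdeal R) R)]
    (hfg : (maximalIdeal R).FG) {a : R} (ha : maximalIdeal R = (Ideal.span {a}).radical) :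
    maximalIdeal (AdicCompletion (maximalIdeal R) R) =
      (Ideal.span {algebraMap R (AdicCompletion (maximalIdeal R) R) a}).radical := by
  have hmax := AdicCompletion.maximalIdeal_eq_map_of_fg hfg
  refine le_antisymm ?_ ?_
  · rw [hmax, Ideal.map_le_iff_le_comap]
    intro x hx
    obtain ⟨n, hn⟩ := ha.le hx
    refine ⟨n, ?_⟩
    rw [← map_pow, ← Set.image_singleton, ← Ideal.map_span]
    exact Ideal.mem_map_of_mem _ hn
  · rw [(inferInstance : (maximalIdeal (AdicCompletion (maximalIdeal R) R)).IsPrime).radical_le_iff,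
      Ideal.span_singleton_le_iff_mem, hmax]
    exact Ideal.mem_map_of_mem _ (ha ▸ Ideal.le_radical (Ideal.mem_span_singleton_self a))

/-- Let `R` be a generalized local ring (a local ring whose maximal ideal `M` is finitely
generated with `∩_{i>0} M^i = 0`) whose maximal ideal is regular and the radical of a
principal ideal.  Then each minimal prime ideal of `R` and each one-dimensional prime ideal
of `R` is contracted from a minimal prime ideal of the completion `R̂`. -/
theorem contraction_of_minimal_primes {R : Type*} [CommRing R] [IsLocalRing R]
    (hfg : (IsLocalRing.maximalIdeal R).FG)
    (hsep : ⨅ i : ℕ, IsLocalRing.maximalIdeal R ^ (i + 1) = ⊥)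
    (hreg : ∃ r ∈ IsLocalRing.maximalIdeal R, r ∈ R⁰)
    (hrad : ∃ a : R, IsLocalRing.maximalIdeal R = (Ideal.span {a}).radical)
    (P : Ideal R)
    (hP : P ∈ minimalPrimes R ∨ (P.IsPrime ∧ ringKrullDim (R ⧸ P) = 1)) :
    ∃ Q ∈ minimalPrimes (AdicCompletion (IsLocalRing.maximalIdeal R) R),
      Q.comap (algebraMap R (AdicCompletion (IsLocalRing.maximalIdeal R) R)) = P := by
  obtain ⟨a, ha⟩ := hrad
  rcases hP with hP | ⟨hP, hdim⟩
  · have : IsHausdorff (maximalIdeal R) R := ⟨fun x hx ↦ by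
      rw [← Ideal.mem_bot, ← hsep, Ideal.mem_iInf]
      intro i
      simpa using SModEq.sub_mem.mp (hx (i + 1))⟩
    have hinj : Function.Injective (algebraMap R (AdicCompletion (maximalIdeal R) R)) :=
      AdicCompletion.of_injective (maximalIdeal R) R
    refine Ideal.exists_minimalPrimes_comap_eq (I := ⊥) _ P ?_
    rwa [Ideal.comap_bot_of_injective _ hinj]
  · have := AdicCompletion.isLocalRing_of_fg hfg
    have := AdicCompletion.isAdicComplete_of_fg hfg
    have hrad' := maximalIdeal_adicCompletion_eq_radical hfg ha
    have : IsNoetherianRing (AdicCompletion (maximalIdeal R) R) :=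
      isNoetherianRing_of_isAdicComplete
        (by rw [AdicCompletion.maximalIdeal_eq_map_of_fg hfg]; exact hfg.map _) hrad'
    have := isNoetherianRing_quotient_of_ringKrullDim_eq_one hfg P hdim
    have : IsHausdorff ((maximalIdeal R).map (Ideal.Quotient.mk P)) (R ⧸ P) := by
      refine .of_isDomain _ fun h ↦ ?_
      have := congr(Ideal.comap (Ideal.Quotient.mk P) $h)
      rw [Ideal.comap_map_of_surjective _ Ideal.Quotient.mk_surjective,
        ← RingHom.ker_eq_comap_bot, Ideal.mk_ker, Ideal.comap_top,
        sup_eq_left.mpr (le_maximalIdeal hP.ne_top)] at this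
      exact (maximalIdeal.isMaximal R).ne_top this
    obtain ⟨Q, hQ, hQP⟩ := (Ideal.comap_map_eq_self_iff_of_isPrime P).mp
      (comap_map_adicCompletion_eq (maximalIdeal R) P)
    refine ⟨Q, mem_minimalPrimes_of_notMem hrad' hQ fun haQ ↦ ?_, hQP⟩
    have hPm : P = maximalIdeal R := isMaximal_of_mem_of_eq_radical ha hP (by rwa [← hQP])
    -- Then `R ⧸ P` would be a field, of dimension zero.
    subst hPm
    let := Ideal.Quotient.field (maximalIdeal R)
    rw [ringKrullDim_eq_zero_of_field] at hdim
    exact zero_ne_one hdim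
end

section
/- Let R be a generalized local ring. If the M-adic completion R̂ of R is a one-dimensional integral domain, then R is a one-dimensional Noetherian integral domain. -/
/-!
Write `M` for the maximal ideal and `R̂` for the completion. As `R` is separated, it embeds in `R̂`
and is therefore a domain. The heart of the matter is that every nonzero principal ideal `xR`
contains a power of `M`. Indeed `R̂` is a one-dimensional local domain with finitely generated
maximal ideal `M R̂`, so `M ^ n R̂ ⊆ x R̂` for some `n`; reducing an equation `a = x b̂` modulo
`M ^ (n + 1)` gives `M ^ n ⊆ xR + M ^ (n + 1)`, and Nakayama's lemma yields `M ^ n ⊆ xR`.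

Consequently every nonzero prime of `R` equals `M`, so all primes are finitely generated and `R` is
Noetherian by Cohen's theorem. If `R` were a field, then `M = 0` and `R ≃ R̂` would have
dimension one, which is absurd.
-/

open IsLocalRing

/-- Contraction from the completion, up to one further power of `I`: if `J R̂ ⊆ x R̂`, then
`J ⊆ xR + I ^ k` for every `k`. -/
lemma le_span_sup_pow_of_map_le {R : Type*} [CommRing R] {I J : Ideal R} {x : R}
    (h : J.map (algebraMap R (AdicCompletion I R)) ≤
      Ideal.span {algebraMap R (AdicCompletion I R) x}) (k : ℕ) :
    J ≤ Ideal.span {x} ⊔ I ^ k := by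
  intro a ha
  obtain ⟨c, hc⟩ := Ideal.mem_span_singleton'.mp (h (Ideal.mem_map_of_mem _ ha))
  obtain ⟨b, hb⟩ := Ideal.Quotient.mk_surjective (AdicCompletion.evalₐ I k c)
  have h1 := congrArg (AdicCompletion.evalₐ I k) hc
  rw [map_mul, AlgHom.commutes, AlgHom.commutes, ← hb, Ideal.Quotient.algebraMap_eq,
    ← map_mul, eq_comm, Ideal.Quotient.mk_eq_mk_iff_sub_mem] at h1
  have h2 : b * x + (a - b * x) ∈ Ideal.span {x} ⊔ I ^ k :=
    Submodule.add_mem_sup (Ideal.mem_span_singleton'.mpr ⟨b, rfl⟩) h1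
  simpa using h2

/-- Let `R` be a generalized local ring (a local ring whose maximal ideal `M` is finitely
generated with `∩_{i>0} M^i = 0`).  If the `M`-adic completion `R̂` is a one-dimensional
integral domain, then `R` is a one-dimensional Noetherian integral domain. -/
theorem glr_of_completion_one_dim_domain {R : Type*} [CommRing R] [IsLocalRing R]
    (hfg : (IsLocalRing.maximalIdeal R).FG)
    (hsep : ⨅ i : ℕ, IsLocalRing.maximalIdeal R ^ (i + 1) = ⊥)
    (hdom : IsDomain (AdicCompletion (IsLocalRing.maximalIdeal R) R))
    (hdim : ringKrullDim (AdicCompletion (IsLocalRing.maximalIdeal R) R) = 1) :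
    IsDomain R ∧ IsNoetherianRing R ∧ ringKrullDim R = 1 := by
  have hhaus : IsHausdorff (maximalIdeal R) R := by
    refine ⟨fun x hx => ?_⟩
    rw [← Ideal.mem_bot, ← hsep, Ideal.mem_iInf]
    intro i
    simpa [SModEq.zero] using hx (i + 1)
  have hinj : Function.Injective
      (algebraMap R (AdicCompletion (maximalIdeal R) R)) :=
    AdicCompletion.of_injective (maximalIdeal R) R
  have hR : IsDomain R := hinj.isDomain _
  have hloc := AdicCompletion.isLocalRing_of_fg hfg
  have hrad := (ringKrullDim_eq_one_iff_of_isLocalRing_isDomain.mp hdim).2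
  have key : ∀ x : R, x ≠ 0 → maximalIdeal R ≤ (Ideal.span {x}).radical := by
    intro x hx
    have h1 := hrad _ ((map_ne_zero_iff _ hinj).mpr hx)
    rw [AdicCompletion.maximalIdeal_eq_map_of_fg hfg] at h1
    obtain ⟨n, hn⟩ := Ideal.exists_pow_le_of_le_radical_of_fg h1 (hfg.map _)
    rw [← Ideal.map_pow] at hn
    have h2 := le_span_sup_pow_of_map_le hn (n + 1)
    have h3 : maximalIdeal R ^ n ≤ Ideal.span {x} := by
      refine Submodule.le_of_le_smul_of_le_jacobson_bot (I := maximalIdeal R)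
        (Submodule.FG.pow hfg n) (maximalIdeal_le_jacobson ⊥) ?_
      rwa [smul_eq_mul, ← pow_succ']
    exact fun y hy => ⟨n, h3 (Ideal.pow_mem_pow hy n)⟩
  have hfield : ¬ IsField R := by
    intro hF
    have hM : maximalIdeal R = ⊥ := isField_iff_maximalIdeal_eq.mp hF
    have : IsAdicComplete (maximalIdeal R) R := by rw [hM]; infer_instance
    have h1 := ringKrullDim_eq_of_ringEquiv
      (AdicCompletion.ofAlgEquiv (S := R) (maximalIdeal R)).toRingEquiv
    rw [hdim, ringKrullDim_eq_zero_of_isField hF] at h1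
    exact zero_ne_one h1
  have hdimR : ringKrullDim R = 1 :=
    ringKrullDim_eq_one_iff_of_isLocalRing_isDomain.mpr ⟨hfield, key⟩
  refine ⟨hR, .of_prime_ne_bot fun P hP hP0 => ?_, hdimR⟩
  have hmax : P.IsMaximal := Ring.krullDimLE_one_iff_of_noZeroDivisors.mp
    (Ring.krullDimLE_iff.mpr (by simp [hdimR])) P hP0 hP
  rwa [eq_maximalIdeal hmax]
end
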